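/- Let f : ℝ → ℝ be of class C¹ with f(0) = 0, and suppose there exist C, δ > 0 with 0 ≤ s f(s) ≤ C s⁴ for all s ∈ (−δ, δ). Then there exists ε₀ > 0 such that the following holds: if φ : [0,∞)×(0,∞) → ℝ is smooth, with r ↦ φ(t,r) compactly supported in (0,∞) for each t, satisfies ∂ₜ²φ = ∂ᵣ²φ + (2/r)∂ᵣφ − f(φ), and the corresponding radial function Φ(t,x) = φ(t,|x|) on ℝ³ satisfies sup_{t≥0} ( (∫_{ℝ³}(Φ² + |∇Φ|²) dx)^{1/2} + sup_x |Φ(t,x)| ) ≤ ε for some ε ≤ ε₀, then ∫₀^∞ ( ∫₀^∞ (r²/(1+r)⁴)( φ² + (∂ᵣφ)² + (∂ₜφ)² )(t,r) dr ) dt < ∞. -/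

import Mathlib

open MeasureTheory Filter

noncomputable section

/-- First time derivative `∂ₜφ`. -/
def pt (φ : ℝ → ℝ → ℝ) (t r : ℝ) : ℝ := deriv (fun s => φ s r) t

/-- Radial derivative `∂ᵣφ`. -/
def pr (φ : ℝ → ℝ → ℝ) (t r : ℝ) : ℝ := deriv (fun ρ => φ t ρ) r

/-- Second time derivative `∂ₜ²φ`. -/
def ptt (φ : ℝ → ℝ → ℝ) (t r : ℝ) : ℝ := deriv (fun s => pt φ s r) t

/-- Second radial derivative `∂ᵣ²φ`. -/
def prr (φ : ℝ → ℝ → ℝ) (t r : ℝ) : ℝ := deriv (fun ρ => pr φ t ρ) r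

/-- The potential `F(s) = ∫₀ˢ f(σ) dσ`. -/
def pot (f : ℝ → ℝ) (s : ℝ) : ℝ := ∫ σ in (0:ℝ)..s, f σ

/-- The radial profile `r ↦ φ t r` is compactly supported inside `(0,∞)` for each `t`. -/
def SuppIn (φ : ℝ → ℝ → ℝ) : Prop :=
  ∀ t : ℝ, ∃ a b : ℝ, 0 < a ∧ ∀ r : ℝ, r < a ∨ b < r → φ t r = 0

/-- Euclidean space `ℝ³`. -/
abbrev E3 : Type := EuclideanSpace ℝ (Fin 3)

/-!
The reduced field `u = r φ` solves `∂ₜ²u = ∂ᵣ²u - r f(φ)` on the half-line with `u = 0` at `r = 0`.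
Multiplying by `a ∂ᵣu + b u` with `a = -r / (1 + r)` and `b` close to `a' / 2` gives a virial
identity: the time derivative of `∫ (a ∂ᵣu + b u) ∂ₜu dr` is a bulk integral which, by Hardy's
inequality, controls the weighted norms of `u` up to a potential term. That term is at most
quartic in `u`, so smallness of `φ` in `L² ∩ L^∞` absorbs it. The virial functional is itself
bounded by the conserved energy and the mass, uniformly in time, and so is the time integral of
the bulk.

Differentiating under the integrals requires the support to be bounded locally uniformly in time,
whereas it is only assumed bounded at each time. By Baire's theorem it is uniformly bounded near
some time, and finite speed of propagation, forwards and backwards, then places it in a light cone.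
-/

section DirectionalDerivative

variable {E : Type*} [NormedAddCommGroup E] [NormedSpace ℝ E] {V : E → ℝ}

/-- The derivative of `V` in the direction `e`, as a function of the base point, so that it can be
iterated. -/
def dirDeriv (e : E) (V : E → ℝ) : E → ℝ := fun z => fderiv ℝ V z e

lemma contDiff_dirDeriv {m n : WithTop ℕ∞} (hV : ContDiff ℝ n V) (hmn : m + 1 ≤ n) (e : E) :
    ContDiff ℝ m (dirDeriv e V) :=
  (hV.fderiv_right hmn).clm_apply contDiff_const

lemma hasDerivAt_dirDeriv (hV : ContDiff ℝ 1 V) (z e : E) (s : ℝ) :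
    HasDerivAt (fun σ : ℝ => V (z + σ • e)) (dirDeriv e V (z + s • e)) s := by
  have hline : HasDerivAt (fun σ : ℝ => z + σ • e) e s := by
    simpa using ((hasDerivAt_id s).smul_const e).const_add z
  exact (hV.differentiable one_ne_zero _).hasFDerivAt.comp_hasDerivAt s hline

lemma dirDeriv_dirDeriv (hV : ContDiff ℝ 2 V) (e f z : E) :
    dirDeriv e (dirDeriv f V) z = fderiv ℝ (fderiv ℝ V) z e f := by
  have hdiff : DifferentiableAt ℝ (fderiv ℝ V) z :=
    (hV.fderiv_right (m := 1) (by norm_num)).differentiable one_ne_zero z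
  change fderiv ℝ (fun z => fderiv ℝ V z f) z e = _
  simp [fderiv_clm_apply hdiff (differentiableAt_const f)]

lemma dirDeriv_comm (hV : ContDiff ℝ 2 V) (e f z : E) :
    dirDeriv e (dirDeriv f V) z = dirDeriv f (dirDeriv e V) z := by
  rw [dirDeriv_dirDeriv hV, dirDeriv_dirDeriv hV]
  exact hV.contDiffAt.isSymmSndFDerivAt (by simp) e f

lemma dirDeriv_sub_dirDeriv_add (hV : ContDiff ℝ 2 V) (e f z : E) :
    dirDeriv (e - f) (dirDeriv (e + f) V) z =
      dirDeriv e (dirDeriv e V) z - dirDeriv f (dirDeriv f V) z := by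
  have hsymm := dirDeriv_comm hV e f z
  simp only [dirDeriv_dirDeriv hV, map_add, map_sub, sub_apply] at hsymm ⊢
  linarith

lemma dirDeriv_smul_dirDeriv_smul (hV : ContDiff ℝ 2 V) (c : ℝ) (e z : E) :
    dirDeriv (c • e) (dirDeriv (c • e) V) z = c ^ 2 * dirDeriv e (dirDeriv e V) z := by
  simp only [dirDeriv_dirDeriv hV, map_smul, smul_apply, smul_eq_mul]
  ring

end DirectionalDerivative

section WaveUniqueness

variable {E : Type*} [NormedAddCommGroup E] [NormedSpace ℝ E] {V : E → ℝ} {z e f : E}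
  {s₀ l A : ℝ}

/-- `|V| ≤ A exp (l s)` on the backward light triangle `{z + s e + x f | 0 ≤ s, |x| ≤ s₀ - s}`,
with time direction `e`, space direction `f`, base centred at `z` and apex `z + s₀ e`. -/
def ExpBoundedOnTriangle (V : E → ℝ) (z e f : E) (s₀ l A : ℝ) : Prop :=
  ∀ s x : ℝ, 0 ≤ s → |x| ≤ s₀ - s → |V (z + s • e + x • f)| ≤ A * Real.exp (l * s)

lemma abs_le_mul_exp_of_abs_deriv_le {h h' : ℝ → ℝ} {s : ℝ} (hA : 0 ≤ A) (hl : 0 < l)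
    (hs : 0 ≤ s) (hderiv : ∀ σ, HasDerivAt h (h' σ) σ) (h0 : h 0 = 0)
    (hbound : ∀ σ ∈ Set.Ico 0 s, |h' σ| ≤ A * Real.exp (l * σ)) :
    |h s| ≤ A / l * Real.exp (l * s) := by
  have hexp (σ : ℝ) :
      HasDerivAt (fun σ => A / l * Real.exp (l * σ)) (A * Real.exp (l * σ)) σ := by
    refine ((((hasDerivAt_id σ).const_mul l).exp).const_mul (A / l)).congr_deriv ?_
    simp only [id]
    field_simp
  refine image_norm_le_of_norm_deriv_right_le_deriv_boundary
    (fun σ _ => (hderiv σ).continuousAt.continuousWithinAt)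
    (fun σ _ => (hderiv σ).hasDerivWithinAt) ?_ hexp hbound (Set.right_mem_Icc.2 hs)
  rw [h0, norm_zero]
  positivity

/-- For `|η| ≤ 1` the line through a point of the triangle in the direction `e + η f` stays in the
triangle until it meets the base. -/
lemma ExpBoundedOnTriangle.of_dirDeriv {η : ℝ} (hV : ContDiff ℝ 1 V) (hη : |η| ≤ 1)
    (hA : 0 ≤ A) (hl : 0 < l) (hbase : ∀ x : ℝ, |x| ≤ s₀ → V (z + x • f) = 0)
    (hderiv : ExpBoundedOnTriangle (dirDeriv (e + η • f) V) z e f s₀ l A) :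
    ExpBoundedOnTriangle V z e f s₀ l (A / l) := by
  intro s x hs hx
  have hline (σ : ℝ) : z + (x - η * s) • f + σ • (e + η • f) =
      z + σ • e + (x - η * (s - σ)) • f := by module
  have hmem (σ : ℝ) (hσ : σ ≤ s) : |x - η * (s - σ)| ≤ s₀ - σ := by
    have : |η * (s - σ)| ≤ s - σ := by
      rw [abs_mul, abs_of_nonneg (sub_nonneg.2 hσ)]
      exact mul_le_of_le_one_left (sub_nonneg.2 hσ) hη
    linarith [abs_sub x (η * (s - σ))]
  have hstart : V (z + (x - η * s) • f + (0 : ℝ) • (e + η • f)) = 0 := by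
    simpa using hbase (x - η * s) (by simpa using hmem 0 hs)
  have hgrow := abs_le_mul_exp_of_abs_deriv_le hA hl hs
    (hasDerivAt_dirDeriv hV (z + (x - η * s) • f) (e + η • f)) hstart fun σ hσ => by
      rw [hline]
      exact hderiv σ _ hσ.1 (hmem σ hσ.2.le)
  rwa [hline, sub_self, mul_zero, sub_zero] at hgrow

lemma exists_attained_expBoundedOnTriangle (hV : Continuous V) (z e f : E) (hs₀ : 0 ≤ s₀)
    (l : ℝ) :
    ∃ M s x : ℝ, 0 ≤ s ∧ |x| ≤ s₀ - s ∧ |V (z + s • e + x • f)| = M * Real.exp (l * s) ∧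
      ExpBoundedOnTriangle V z e f s₀ l M := by
  let triangle : Set (ℝ × ℝ) := {p | 0 ≤ p.1 ∧ |p.2| ≤ s₀ - p.1}
  have hcompact : IsCompact triangle := by
    refine (isCompact_Icc (a := ((0, -s₀) : ℝ × ℝ)) (b := (s₀, s₀))).of_isClosed_subset
      ((isClosed_le continuous_const continuous_fst).inter
        (isClosed_le continuous_snd.abs (continuous_const.sub continuous_fst))) ?_
    rintro ⟨s, x⟩ ⟨hs, hx⟩
    simp only [abs_le] at hs hx
    exact ⟨⟨hs, by dsimp; linarith⟩, by dsimp; linarith, by dsimp; linarith⟩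
  obtain ⟨⟨s, x⟩, ⟨hs, hx⟩, hmax⟩ := hcompact.exists_isMaxOn
    (f := fun p : ℝ × ℝ => |V (z + p.1 • e + p.2 • f)| * Real.exp (-(l * p.1)))
    ⟨(s₀, 0), hs₀, by simp⟩ (by fun_prop)
  refine ⟨|V (z + s • e + x • f)| * Real.exp (-(l * s)), s, x, hs, hx, ?_, fun s' x' hs' hx' => ?_⟩
  · rw [mul_assoc, ← Real.exp_add, neg_add_cancel, Real.exp_zero, mul_one]
  · have hle := isMaxOn_iff.1 hmax (s', x') ⟨hs', hx'⟩
    rwa [Real.exp_neg, ← div_eq_mul_inv, div_le_iff₀ (Real.exp_pos _)] at hle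

/-- Integrating along the two families of characteristics turns the bound `M exp (l s)` on `V` into
`K M / l² exp (l s)`; as `K < l²`, the optimal `M` is zero. -/
theorem eq_zero_of_abs_wave_le {K : ℝ} (hV : ContDiff ℝ 2 V) (hK : 0 ≤ K) (hs₀ : 0 ≤ s₀)
    (hwave : ∀ s x : ℝ, 0 ≤ s → |x| ≤ s₀ - s →
      |dirDeriv e (dirDeriv e V) (z + s • e + x • f) -
        dirDeriv f (dirDeriv f V) (z + s • e + x • f)| ≤ K * |V (z + s • e + x • f)|)
    (hbase : ∀ x : ℝ, |x| ≤ s₀ → V (z + x • f) = 0)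
    (hbase' : ∀ x : ℝ, |x| ≤ s₀ → dirDeriv (e + f) V (z + x • f) = 0) :
    V (z + s₀ • e) = 0 := by
  obtain ⟨M, s, x, hs, hx, hattained, hM⟩ :=
    exists_attained_expBoundedOnTriangle hV.continuous z e f hs₀ (K + 1)
  have hM0 : 0 ≤ M :=
    nonneg_of_mul_nonneg_left (hattained ▸ abs_nonneg _) (Real.exp_pos ((K + 1) * s))
  have hl : 0 < K + 1 := by positivity
  have hwaveM : ExpBoundedOnTriangle (dirDeriv (e + (-1 : ℝ) • f) (dirDeriv (e + f) V))
      z e f s₀ (K + 1) (K * M) := by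
    intro s x hs hx
    rw [neg_one_smul, ← sub_eq_add_neg, dirDeriv_sub_dirDeriv_add hV, mul_assoc]
    exact (hwave s x hs hx).trans (mul_le_mul_of_nonneg_left (hM s x hs hx) hK)
  have houtgoing : ExpBoundedOnTriangle (dirDeriv (e + (1 : ℝ) • f) V) z e f s₀ (K + 1)
      (K * M / (K + 1)) := by
    rw [one_smul]
    exact .of_dirDeriv (contDiff_dirDeriv hV (by norm_num) _) (by simp) (by positivity) hl
      hbase' hwaveM
  have hV' : ExpBoundedOnTriangle V z e f s₀ (K + 1) (K * M / (K + 1) / (K + 1)) :=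
    .of_dirDeriv (hV.of_le (by norm_num)) (by simp) (by positivity) hl hbase houtgoing
  have hcontract : M ≤ K * M / (K + 1) / (K + 1) :=
    le_of_mul_le_mul_right (hattained ▸ hV' s x hs hx) (Real.exp_pos _)
  have hMzero : M = 0 := by
    rw [div_div, le_div_iff₀ (by positivity)] at hcontract
    nlinarith [mul_nonneg hM0 hK, mul_nonneg hM0 (sq_nonneg K)]
  simpa [hMzero] using hM s₀ 0 hs₀ (by simp)

end WaveUniqueness

section PartialDerivatives

variable {u : ℝ → ℝ → ℝ}

lemma hasDerivAt_fst_dirDeriv (hu : ContDiff ℝ 1 u.uncurry) (t r : ℝ) :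
    HasDerivAt (fun s => u s r) (dirDeriv (1, 0) u.uncurry (t, r)) t := by
  simpa using hasDerivAt_dirDeriv hu (0, r) (1, 0) t

lemma hasDerivAt_snd_dirDeriv (hu : ContDiff ℝ 1 u.uncurry) (t r : ℝ) :
    HasDerivAt (u t) (dirDeriv (0, 1) u.uncurry (t, r)) r := by
  simpa using hasDerivAt_dirDeriv hu (t, 0) (0, 1) r

lemma uncurry_pt (hu : ContDiff ℝ 1 u.uncurry) : (pt u).uncurry = dirDeriv (1, 0) u.uncurry :=
  funext fun z => (hasDerivAt_fst_dirDeriv hu z.1 z.2).deriv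

lemma uncurry_pr (hu : ContDiff ℝ 1 u.uncurry) : (pr u).uncurry = dirDeriv (0, 1) u.uncurry :=
  funext fun z => (hasDerivAt_snd_dirDeriv hu z.1 z.2).deriv

lemma hasDerivAt_pt (hu : ContDiff ℝ 1 u.uncurry) (t r : ℝ) :
    HasDerivAt (fun s => u s r) (pt u t r) t :=
  (hasDerivAt_fst_dirDeriv hu t r).differentiableAt.hasDerivAt

lemma hasDerivAt_pr (hu : ContDiff ℝ 1 u.uncurry) (t r : ℝ) : HasDerivAt (u t) (pr u t r) r :=
  (hasDerivAt_snd_dirDeriv hu t r).differentiableAt.hasDerivAt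

lemma contDiff_pt (hu : ContDiff ℝ 2 u.uncurry) : ContDiff ℝ 1 (pt u).uncurry := by
  rw [uncurry_pt (hu.of_le (by norm_num))]
  exact contDiff_dirDeriv hu (by norm_num) _

lemma contDiff_pr (hu : ContDiff ℝ 2 u.uncurry) : ContDiff ℝ 1 (pr u).uncurry := by
  rw [uncurry_pr (hu.of_le (by norm_num))]
  exact contDiff_dirDeriv hu (by norm_num) _

lemma continuous_uncurry_pt (hu : ContDiff ℝ 1 u.uncurry) : Continuous (pt u).uncurry := by
  rw [uncurry_pt hu]
  exact (contDiff_dirDeriv hu (m := 0) (by norm_num) _).continuous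

lemma continuous_uncurry_pr (hu : ContDiff ℝ 1 u.uncurry) : Continuous (pr u).uncurry := by
  rw [uncurry_pr hu]
  exact (contDiff_dirDeriv hu (m := 0) (by norm_num) _).continuous

lemma uncurry_ptt (hu : ContDiff ℝ 2 u.uncurry) :
    (ptt u).uncurry = dirDeriv (1, 0) (dirDeriv (1, 0) u.uncurry) := by
  rw [← uncurry_pt (hu.of_le (by norm_num)), ← uncurry_pt (contDiff_pt hu)]
  rfl

lemma uncurry_prr (hu : ContDiff ℝ 2 u.uncurry) :
    (prr u).uncurry = dirDeriv (0, 1) (dirDeriv (0, 1) u.uncurry) := by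
  rw [← uncurry_pr (hu.of_le (by norm_num)), ← uncurry_pr (contDiff_pr hu)]
  rfl

lemma pt_pr_comm (hu : ContDiff ℝ 2 u.uncurry) (t r : ℝ) : pt (pr u) t r = pr (pt u) t r := by
  have hu1 : ContDiff ℝ 1 u.uncurry := hu.of_le (by norm_num)
  change (pt (pr u)).uncurry (t, r) = (pr (pt u)).uncurry (t, r)
  rw [uncurry_pt (contDiff_pr hu), uncurry_pr (contDiff_pt hu), uncurry_pr hu1, uncurry_pt hu1]
  exact dirDeriv_comm hu _ _ _

end PartialDerivatives

section Reduction

variable {φ : ℝ → ℝ → ℝ}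

/-- The reduced field `u = r φ`. It turns the radial wave operator `∂ₜ² - ∂ᵣ² - (2/r) ∂ᵣ` into the
one-dimensional one and vanishes at `r = 0`. -/
def reduced (φ : ℝ → ℝ → ℝ) (t r : ℝ) : ℝ := r * φ t r

lemma contDiff_reduced {n : WithTop ℕ∞} (hφ : ContDiff ℝ n φ.uncurry) :
    ContDiff ℝ n (reduced φ).uncurry :=
  contDiff_snd.mul hφ

lemma pt_reduced (hφ : ContDiff ℝ 1 φ.uncurry) (t r : ℝ) : pt (reduced φ) t r = r * pt φ t r :=
  ((hasDerivAt_pt hφ t r).const_mul r).deriv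

lemma pr_reduced (hφ : ContDiff ℝ 1 φ.uncurry) (t r : ℝ) :
    pr (reduced φ) t r = φ t r + r * pr φ t r := by
  refine ((hasDerivAt_id r).mul (hasDerivAt_pr hφ t r)).deriv.trans ?_
  rw [one_mul, id]

lemma ptt_reduced (hφ : ContDiff ℝ 2 φ.uncurry) (t r : ℝ) :
    ptt (reduced φ) t r = r * ptt φ t r := by
  simp only [ptt, pt_reduced (hφ.of_le (by norm_num))]
  exact ((hasDerivAt_pt (contDiff_pt hφ) t r).const_mul r).deriv

lemma prr_reduced (hφ : ContDiff ℝ 2 φ.uncurry) (t r : ℝ) :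
    prr (reduced φ) t r = 2 * pr φ t r + r * prr φ t r := by
  have hφ1 : ContDiff ℝ 1 φ.uncurry := hφ.of_le (by norm_num)
  simp only [prr, pr_reduced hφ1]
  refine ((hasDerivAt_pr hφ1 t r).add
    ((hasDerivAt_id r).mul (hasDerivAt_pr (contDiff_pr hφ) t r))).deriv.trans ?_
  change pr φ t r + (1 * pr φ t r + r * prr φ t r) = 2 * pr φ t r + r * prr φ t r
  ring

/-- A `C²` solution of `∂ₜ²φ = ∂ᵣ²φ + (2/r) ∂ᵣφ - f(φ)` on `[0,∞) × (0,∞)` whose profile at each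
time has bounded support. -/
structure IsRadialWave (f : ℝ → ℝ) (φ : ℝ → ℝ → ℝ) : Prop where
  contDiff : ContDiff ℝ 2 φ.uncurry
  bounded_support : ∀ t : ℝ, 0 ≤ t → ∃ b : ℝ, ∀ r : ℝ, b < r → φ t r = 0
  equation : ∀ t : ℝ, 0 ≤ t → ∀ r : ℝ, 0 < r →
    ptt φ t r = prr φ t r + (2 / r) * pr φ t r - f (φ t r)

namespace IsRadialWave

variable {f : ℝ → ℝ}

lemma contDiff_one (h : IsRadialWave f φ) : ContDiff ℝ 1 φ.uncurry :=
  h.contDiff.of_le (by norm_num)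

lemma ptt_reduced_eq (h : IsRadialWave f φ) {t r : ℝ} (ht : 0 ≤ t) (hr : 0 < r) :
    ptt (reduced φ) t r = prr (reduced φ) t r - r * f (φ t r) := by
  rw [ptt_reduced h.contDiff, prr_reduced h.contDiff, h.equation t ht r hr]
  field_simp
  ring

end IsRadialWave

end Reduction

section FinitePropagation

variable {f : ℝ → ℝ} {φ : ℝ → ℝ → ℝ} {K N : ℝ}

lemma exists_eventually_bounded_support (hφ : Continuous φ.uncurry)
    (hsupp : ∀ t : ℝ, 0 ≤ t → ∃ b : ℝ, ∀ r : ℝ, b < r → φ t r = 0) :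
    ∃ t₁ b : ℝ, 0 < t₁ ∧ 0 ≤ b ∧ ∀ᶠ t in nhds t₁, ∀ r : ℝ, b < r → φ t r = 0 := by
  let A (n : ℕ) : Set ℝ := Set.Iic 0 ∪ {t | ∀ r : ℝ, (n : ℝ) < r → φ t r = 0}
  have hclosed (n : ℕ) : IsClosed (A n) := by
    refine isClosed_Iic.union ?_
    simp only [Set.ofPred_forall]
    exact isClosed_iInter fun r => isClosed_iInter fun _ =>
      isClosed_eq (hφ.comp (Continuous.prodMk_left r)) continuous_const
  have hcover : ⋃ n, A n = Set.univ := by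
    refine Set.eq_univ_of_forall fun t => Set.mem_iUnion.2 ?_
    rcases le_total t 0 with ht | ht
    · exact ⟨0, Or.inl ht⟩
    · obtain ⟨b, hb⟩ := hsupp t ht
      obtain ⟨n, hn⟩ := exists_nat_gt b
      exact ⟨n, Or.inr fun r hr => hb r (hn.trans hr)⟩
  obtain ⟨t₁, ht₁, hpos⟩ :=
    (dense_iUnion_interior_of_closed hclosed hcover).exists_mem_open isOpen_Ioi
      (Set.nonempty_Ioi (a := 0))
  obtain ⟨n, hn⟩ := Set.mem_iUnion.1 ht₁
  refine ⟨t₁, n, hpos, n.cast_nonneg, ?_⟩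
  filter_upwards [mem_interior_iff_mem_nhds.1 hn, Ioi_mem_nhds hpos] with t ht htpos
  exact ht.resolve_left (Set.notMem_Iic.2 htpos)

/-- `σ = 1` propagates forward and `σ = -1` backward in time. -/
lemma IsRadialWave.eq_zero_of_eventually_eq_zero (h : IsRadialWave f φ) (hK : 0 ≤ K)
    (hf : ∀ t r : ℝ, 0 ≤ t → 0 < r → |f (φ t r)| ≤ K * |φ t r|)
    {t₁ b s₀ r σ : ℝ} (ht₁ : 0 ≤ t₁) (hb : 0 ≤ b) (hs₀ : 0 ≤ s₀) (hσ : σ = 1 ∨ σ = -1)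
    (ht : 0 ≤ t₁ + s₀ * σ) (hr : b + s₀ < r)
    (hzero : ∀ᶠ t in nhds t₁, ∀ ρ : ℝ, b < ρ → φ t ρ = 0) :
    φ (t₁ + s₀ * σ) r = 0 := by
  have hu := contDiff_reduced h.contDiff
  have hbase (x : ℝ) (hx : |x| ≤ s₀) :
      (reduced φ).uncurry =ᶠ[nhds (t₁, r + x)] fun _ => 0 := by
    have hbx : b < r + x := by linarith [neg_le_of_abs_le hx]
    filter_upwards [hzero.prod_nhds (Ioi_mem_nhds hbx)] with z hz
    simp [Function.uncurry, reduced, hz.1 z.2 hz.2]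
  have hwave (s x : ℝ) (hs : 0 ≤ s) (hx : |x| ≤ s₀ - s) :
      |ptt (reduced φ) (t₁ + s * σ) (r + x) - prr (reduced φ) (t₁ + s * σ) (r + x)| ≤
        K * |reduced φ (t₁ + s * σ) (r + x)| := by
    have hr' : 0 < r + x := by linarith [neg_le_of_abs_le hx]
    have ht' : 0 ≤ t₁ + s * σ := by rcases hσ with rfl | rfl <;> linarith [abs_nonneg x]
    rw [h.ptt_reduced_eq ht' hr', sub_sub_cancel_left, abs_neg, reduced, abs_mul, abs_mul,
      mul_left_comm]
    exact mul_le_mul_of_nonneg_left (hf _ _ ht' hr') (abs_nonneg _)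
  have hσ2 : σ ^ 2 = 1 := by rcases hσ with rfl | rfl <;> norm_num
  have hapex : (reduced φ).uncurry ((t₁, r) + s₀ • σ • (1, 0)) = 0 := by
    refine eq_zero_of_abs_wave_le (f := (0, 1)) hu hK hs₀ (fun s x hs hx => ?_)
      (fun x hx => ?_) (fun x hx => ?_)
    · rw [dirDeriv_smul_dirDeriv_smul hu, hσ2, one_mul, ← uncurry_ptt hu, ← uncurry_prr hu]
      simpa using hwave s x hs hx
    · simpa using (hbase x hx).eq_of_nhds
    · simp [dirDeriv, (hbase x hx).fderiv_eq]
  simpa [reduced, (by linarith : r ≠ 0)] using hapex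

lemma IsRadialWave.exists_support_in_cone (h : IsRadialWave f φ) (hK : 0 ≤ K)
    (hf : ∀ t r : ℝ, 0 ≤ t → 0 < r → |f (φ t r)| ≤ K * |φ t r|) :
    ∃ N : ℝ, 0 ≤ N ∧ ∀ t r : ℝ, 0 ≤ t → N + t < r → φ t r = 0 := by
  obtain ⟨t₁, b, ht₁, hb, hzero⟩ :=
    exists_eventually_bounded_support h.contDiff.continuous h.bounded_support
  refine ⟨b + t₁, by positivity, fun t r ht hr => ?_⟩
  rcases le_total t₁ t with hle | hle
  · simpa using h.eq_zero_of_eventually_eq_zero (s₀ := t - t₁) (σ := 1) hK hf ht₁.le hb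
      (by linarith) (Or.inl rfl) (by linarith) (by linarith) hzero
  · simpa using h.eq_zero_of_eventually_eq_zero (s₀ := t₁ - t) (σ := -1) hK hf ht₁.le hb
      (by linarith) (Or.inr rfl) (by linarith) (by linarith) hzero

lemma pr_eq_zero_of_support_in_cone (hN : ∀ t r : ℝ, 0 ≤ t → N + t < r → φ t r = 0) {t r : ℝ}
    (ht : 0 ≤ t) (hr : N + t < r) : pr φ t r = 0 := by
  have hlocal : φ t =ᶠ[nhds r] fun _ => 0 := by
    filter_upwards [Ioi_mem_nhds hr] with ρ hρ using hN t ρ ht hρ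
  exact hlocal.deriv_eq.trans (deriv_const r 0)

lemma pt_eq_zero_of_support_in_cone (hφ : ContDiff ℝ 1 φ.uncurry)
    (hN : ∀ t r : ℝ, 0 ≤ t → N + t < r → φ t r = 0) {t r : ℝ}
    (ht : 0 ≤ t) (hr : N + t < r) : pt φ t r = 0 := by
  have hlater : Set.EqOn (fun τ => pt φ τ r) (fun _ => 0) (Set.Ioo 0 (r - N)) := by
    intro τ hτ
    have hlocal : (fun s => φ s r) =ᶠ[nhds τ] fun _ => 0 := by
      filter_upwards [Ioo_mem_nhds hτ.1 hτ.2] with s hs using hN s r hs.1.le (by linarith [hs.2])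
    exact hlocal.deriv_eq.trans (deriv_const τ 0)
  have hcont : Continuous fun τ => pt φ τ r :=
    (continuous_uncurry_pt hφ).comp (Continuous.prodMk_left r)
  have hpos : 0 < r - N := by linarith
  refine hlater.closure hcont continuous_const ?_
  rw [closure_Ioo hpos.ne]
  exact ⟨ht, by linarith⟩

end FinitePropagation

section Nonlinearity

variable {f : ℝ → ℝ} {C δ s : ℝ}

lemma eq_zero_of_mul_nonneg_near_zero (hf : Continuous f) (hδ : 0 < δ)
    (hsign : ∀ s ∈ Set.Ioo (-δ) δ, 0 ≤ s * f s) : f 0 = 0 := by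
  refine le_antisymm ?_ ?_
  · refine le_of_tendsto (hf.continuousWithinAt (s := Set.Iio 0)) ?_
    filter_upwards [Ioo_mem_nhdsLT (neg_lt_zero.2 hδ)] with s hs
    exact nonpos_of_mul_nonneg_right (hsign s ⟨hs.1, hs.2.trans hδ⟩) hs.2
  · refine ge_of_tendsto (hf.continuousWithinAt (s := Set.Ioi 0)) ?_
    filter_upwards [Ioo_mem_nhdsGT hδ] with s hs
    exact nonneg_of_mul_nonneg_right (hsign s ⟨(neg_lt_zero.2 hδ).trans hs.1, hs.2⟩) hs.1

lemma abs_le_mul_abs_cube_of_growth (hf : Continuous f) (hδ : 0 < δ)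
    (hgrowth : ∀ s ∈ Set.Ioo (-δ) δ, 0 ≤ s * f s ∧ s * f s ≤ C * s ^ 4) (hs : |s| < δ) :
    |f s| ≤ C * |s| ^ 3 := by
  rcases eq_or_ne s 0 with rfl | hne
  · simp [eq_zero_of_mul_nonneg_near_zero hf hδ fun s hs => (hgrowth s hs).1]
  · obtain ⟨hnonneg, hle⟩ := hgrowth s (abs_lt.1 hs)
    refine le_of_mul_le_mul_left ?_ (abs_pos.2 hne)
    calc |s| * |f s| = s * f s := by rw [← abs_mul, abs_of_nonneg hnonneg]
      _ ≤ C * s ^ 4 := hle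
      _ = C * |s| ^ 4 := by rw [Even.pow_abs (by decide)]
      _ = |s| * (C * |s| ^ 3) := by ring

lemma nonneg_of_growth (hδ : 0 < δ)
    (hgrowth : ∀ s ∈ Set.Ioo (-δ) δ, 0 ≤ s * f s ∧ s * f s ≤ C * s ^ 4) : 0 ≤ C := by
  obtain ⟨hnonneg, hle⟩ := hgrowth (δ / 2) ⟨by linarith, by linarith⟩
  exact nonneg_of_mul_nonneg_left (hnonneg.trans hle) (by positivity)

lemma pot_nonneg (hsign : ∀ s ∈ Set.Ioo (-δ) δ, 0 ≤ s * f s) (hs : |s| < δ) : 0 ≤ pot f s := by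
  obtain ⟨hs₁, hs₂⟩ := abs_lt.1 hs
  rcases le_total 0 s with h | h
  · refine intervalIntegral.integral_nonneg_of_ae_restrict h ?_
    filter_upwards [ae_restrict_mem measurableSet_Icc, Measure.ae_ne _ 0] with x hx hne
    have hpos : 0 < x := lt_of_le_of_ne hx.1 (Ne.symm hne)
    exact nonneg_of_mul_nonneg_right (hsign x ⟨by linarith, by linarith [hx.2]⟩) hpos
  · rw [pot, intervalIntegral.integral_symm, ← intervalIntegral.integral_neg]
    refine intervalIntegral.integral_nonneg_of_ae_restrict h ?_
    filter_upwards [ae_restrict_mem measurableSet_Icc, Measure.ae_ne _ 0] with x hx hne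
    have hneg : x < 0 := lt_of_le_of_ne hx.2 hne
    exact neg_nonneg.2
      (nonpos_of_mul_nonneg_right (hsign x ⟨by linarith [hx.1], by linarith⟩) hneg)

lemma pot_le_mul_pow_four (hC : 0 ≤ C) (hf : ∀ s : ℝ, |s| < δ → |f s| ≤ C * |s| ^ 3)
    (hs : |s| < δ) : pot f s ≤ C * s ^ 4 := by
  have hbound (σ : ℝ) (hσ : σ ∈ Set.uIoc 0 s) : ‖f σ‖ ≤ C * |s| ^ 3 := by
    have hσs : |σ| ≤ |s| := by simpa using Set.abs_sub_left_of_mem_uIcc (Set.uIoc_subset_uIcc hσ)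
    exact (hf σ (hσs.trans_lt hs)).trans (by gcongr)
  calc pot f s ≤ ‖pot f s‖ := Real.le_norm_self _
    _ ≤ C * |s| ^ 3 * |s - 0| := intervalIntegral.norm_integral_le_of_norm_le_const hbound
    _ = C * |s| ^ 4 := by rw [sub_zero]; ring
    _ = C * s ^ 4 := by rw [Even.pow_abs (by decide)]

lemma hasDerivAt_pot (hf : Continuous f) (s : ℝ) : HasDerivAt (pot f) (f s) s :=
  intervalIntegral.integral_hasDerivAt_right (hf.intervalIntegrable _ _)
    (hf.stronglyMeasurableAtFilter _ _) hf.continuousAt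

lemma continuous_pot (hf : Continuous f) : Continuous (pot f) :=
  continuous_iff_continuousAt.2 fun s => (hasDerivAt_pot hf s).continuousAt

end Nonlinearity

section WeightedInequalities

variable {v v' w : ℝ → ℝ} {R B : ℝ}

lemma continuousOn_div_one_add_pow (hw : ContinuousOn w (Set.Icc 0 B)) (n : ℕ) :
    ContinuousOn (fun r => w r / (1 + r) ^ n) (Set.Icc 0 B) :=
  hw.div (by fun_prop) fun r hr => pow_ne_zero n (by linarith [hr.1])

lemma intervalIntegrable_div_one_add_pow (hw : Continuous w) (hB : 0 ≤ B) (n : ℕ) :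
    IntervalIntegrable (fun r => w r / (1 + r) ^ n) volume 0 B :=
  (continuousOn_div_one_add_pow hw.continuousOn n).intervalIntegrable_of_Icc hB

lemma integral_sq_div_one_add_pow_nonneg (w : ℝ → ℝ) (hB : 0 ≤ B) (n : ℕ) :
    0 ≤ ∫ r in (0 : ℝ)..B, w r ^ 2 / (1 + r) ^ n := by
  refine intervalIntegral.integral_nonneg hB fun r hr => ?_
  have : 0 ≤ r := hr.1
  positivity

lemma hasDerivAt_div_one_add_pow {r w' : ℝ} (hw : HasDerivAt w w' r) (hr : 0 ≤ r) (n : ℕ) :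
    HasDerivAt (fun r => w r / (1 + r) ^ n) (w' / (1 + r) ^ n - n * w r / (1 + r) ^ (n + 1)) r := by
  have hne : 1 + r ≠ 0 := by linarith
  refine (hw.fun_div (((hasDerivAt_id' r).const_add 1).fun_pow n)
    (pow_ne_zero n hne)).congr_deriv ?_
  rcases n with _ | n
  · simp
  · simp only [Nat.add_sub_cancel, mul_one]
    field_simp
    ring

lemma sub_add_integral_le_integral_of_hasDerivAt {h h' p q : ℝ → ℝ} {a b : ℝ} (hab : a ≤ b)
    (hderiv : ∀ r ∈ Set.Icc a b, HasDerivAt h (h' r) r) (hp : ContinuousOn p (Set.Icc a b))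
    (hq : ContinuousOn q (Set.Icc a b)) (hle : ∀ r ∈ Set.Ioo a b, h' r + q r ≤ p r) :
    h b - h a + ∫ r in a..b, q r ≤ ∫ r in a..b, p r := by
  rw [← le_sub_iff_add_le, ← intervalIntegral.integral_sub (hp.intervalIntegrable_of_Icc hab)
    (hq.intervalIntegrable_of_Icc hab)]
  exact intervalIntegral.sub_le_integral_of_hasDeriv_right_of_le hab
    (fun r hr => (hderiv r hr).continuousAt.continuousWithinAt)
    (fun r hr => (hderiv r (Set.Ioo_subset_Icc_self hr)).hasDerivWithinAt)
    (hp.fun_sub hq).integrableOn_Icc fun r hr => le_sub_iff_add_le.2 (hle r hr)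

lemma sq_div_add_integral_le_integral_deriv_sq (hv : ∀ r, HasDerivAt v (v' r) r)
    (hv' : Continuous v') (h0 : v 0 = 0) (hR : 0 ≤ R) (n : ℕ) :
    v R ^ 2 / (1 + R) ^ (n + 1) + n * ∫ r in (0 : ℝ)..R, v r ^ 2 / (1 + r) ^ (n + 2) ≤
      ∫ r in (0 : ℝ)..R, v' r ^ 2 / (1 + r) ^ n := by
  have hcont : Continuous v := continuous_iff_continuousAt.2 fun r => (hv r).continuousAt
  have hle := sub_add_integral_le_integral_of_hasDerivAt hR
    (fun r hr => hasDerivAt_div_one_add_pow ((hv r).fun_pow 2) hr.1 (n + 1))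
    (p := fun r => v' r ^ 2 / (1 + r) ^ n) (q := fun r => n * (v r ^ 2 / (1 + r) ^ (n + 2)))
    (continuousOn_div_one_add_pow (by fun_prop) n)
    ((continuousOn_div_one_add_pow (by fun_prop) (n + 2)).const_mul _) fun r hr => by
      have hpos : 0 < 1 + r := by linarith [hr.1]
      have hyoung : 0 ≤ (v' r * (1 + r) - v r) ^ 2 / (1 + r) ^ (n + 2) := by positivity
      refine sub_nonneg.1 (hyoung.trans_eq ?_)
      push_cast
      field_simp
      ring
  rw [intervalIntegral.integral_const_mul] at hle
  simpa [h0] using hle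

lemma integral_sq_div_le_integral_deriv_sq (hv : ∀ r, HasDerivAt v (v' r) r)
    (hv' : Continuous v') (h0 : v 0 = 0) (hR : 0 ≤ R) (n : ℕ) :
    (n : ℝ) * ∫ r in (0 : ℝ)..R, v r ^ 2 / (1 + r) ^ (n + 2) ≤
      ∫ r in (0 : ℝ)..R, v' r ^ 2 / (1 + r) ^ n :=
  (le_add_of_nonneg_left (by positivity)).trans
    (sq_div_add_integral_le_integral_deriv_sq hv hv' h0 hR n)

lemma sq_div_le_integral_deriv_sq (hv : ∀ r, HasDerivAt v (v' r) r)
    (hv' : Continuous v') (h0 : v 0 = 0) (hR : 0 ≤ R) (n : ℕ) :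
    v R ^ 2 / (1 + R) ^ (n + 1) ≤ ∫ r in (0 : ℝ)..R, v' r ^ 2 / (1 + r) ^ n := by
  have hnonneg := integral_sq_div_one_add_pow_nonneg v hR (n + 2)
  exact (le_add_of_nonneg_right (by positivity)).trans
    (sq_div_add_integral_le_integral_deriv_sq hv hv' h0 hR n)

lemma integral_pow_four_div_le (hv : ∀ r, HasDerivAt v (v' r) r) (hv' : Continuous v')
    (h0 : v 0 = 0) (hB : 0 ≤ B) (n : ℕ) :
    ∫ r in (0 : ℝ)..B, v r ^ 4 / (1 + r) ^ (n + 1) ≤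
      (∫ r in (0 : ℝ)..B, v' r ^ 2 / (1 + r) ^ n) * ∫ r in (0 : ℝ)..B, v r ^ 2 := by
  have hcont : Continuous v := continuous_iff_continuousAt.2 fun r => (hv r).continuousAt
  have hint : IntervalIntegrable (fun r => v' r ^ 2 / (1 + r) ^ n) volume 0 B :=
    intervalIntegrable_div_one_add_pow (hv'.pow 2) hB n
  rw [← intervalIntegral.integral_const_mul]
  refine intervalIntegral.integral_mono_on hB
    (intervalIntegrable_div_one_add_pow (hcont.pow 4) hB _)
    (Continuous.intervalIntegrable (by fun_prop) _ _) fun r hr => ?_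
  calc v r ^ 4 / (1 + r) ^ (n + 1) = v r ^ 2 / (1 + r) ^ (n + 1) * v r ^ 2 := by ring
    _ ≤ (∫ s in (0 : ℝ)..r, v' s ^ 2 / (1 + s) ^ n) * v r ^ 2 := by
      gcongr
      exact sq_div_le_integral_deriv_sq hv hv' h0 hr.1 n
    _ ≤ (∫ s in (0 : ℝ)..B, v' s ^ 2 / (1 + s) ^ n) * v r ^ 2 := by
      gcongr
      refine intervalIntegral.integral_mono_interval le_rfl hr.1 hr.2 ?_ hint
      filter_upwards [ae_restrict_mem measurableSet_Ioc] with s hs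
      have : 0 ≤ s := hs.1.le
      positivity

lemma integral_sq_div_le_integral_deriv_id_mul_sq (hv : ∀ r, HasDerivAt v (v' r) r)
    (hv' : Continuous v') (hB : 0 ≤ B) (n : ℕ) :
    ∫ r in (0 : ℝ)..B, v r ^ 2 / (1 + r) ^ n ≤
      4 * ∫ r in (0 : ℝ)..B, (v r + r * v' r) ^ 2 / (1 + r) ^ n := by
  have hcont : Continuous v := continuous_iff_continuousAt.2 fun r => (hv r).continuousAt
  have hle := sub_add_integral_le_integral_of_hasDerivAt hB
    (fun r hr => hasDerivAt_div_one_add_pow ((hasDerivAt_id' r).fun_mul ((hv r).fun_pow 2)) hr.1 n)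
    (p := fun r => 2 * ((v r + r * v' r) ^ 2 / (1 + r) ^ n))
    (q := fun r => 1 / 2 * (v r ^ 2 / (1 + r) ^ n))
    ((continuousOn_div_one_add_pow (by fun_prop) n).const_mul _)
    ((continuousOn_div_one_add_pow (by fun_prop) n).const_mul _) fun r hr => by
      have hr0 : 0 < r := hr.1
      have hyoung : 0 ≤ (v r - 2 * (v r + r * v' r)) ^ 2 / 2 / (1 + r) ^ n +
          n * (r * v r ^ 2) / (1 + r) ^ (n + 1) := by positivity
      refine sub_nonneg.1 (hyoung.trans_eq ?_)
      push_cast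
      field_simp
      ring
  have hboundary : 0 ≤ B * v B ^ 2 / (1 + B) ^ n := by positivity
  simp only [intervalIntegral.integral_const_mul, zero_mul, zero_div, sub_zero] at hle
  linarith

end WeightedInequalities

section BalanceLaw

variable {F e G dG Q : ℝ → ℝ → ℝ} {T B : ℝ}

lemma integrableOn_of_continuousOn_rectangle
    (hF : ContinuousOn F.uncurry (Set.Icc 0 T ×ˢ Set.Icc 0 B)) :
    IntegrableOn F.uncurry (Set.Ioc 0 T ×ˢ Set.Ioc 0 B) :=
  (hF.integrableOn_compact (isCompact_Icc.prod isCompact_Icc)).mono_set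
    (Set.prod_mono Set.Ioc_subset_Icc_self Set.Ioc_subset_Icc_self)

lemma intervalIntegrable_slice (hB : 0 ≤ B)
    (hF : ContinuousOn F.uncurry (Set.Icc 0 T ×ˢ Set.Icc 0 B)) {t : ℝ} (ht : t ∈ Set.Icc 0 T) :
    IntervalIntegrable (F t) volume 0 B :=
  (hF.comp (Continuous.prodMk_right t).continuousOn
    fun _ hr => ⟨ht, hr⟩).intervalIntegrable_of_Icc hB

lemma intervalIntegrable_integral_of_continuousOn_rectangle (hT : 0 ≤ T) (hB : 0 ≤ B)
    (hF : ContinuousOn F.uncurry (Set.Icc 0 T ×ˢ Set.Icc 0 B)) :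
    IntervalIntegrable (fun t => ∫ r in (0 : ℝ)..B, F t r) volume 0 T := by
  have hint := integrableOn_of_continuousOn_rectangle hF
  rw [IntegrableOn, Measure.volume_eq_prod, ← Measure.prod_restrict] at hint
  rw [intervalIntegrable_iff_integrableOn_Ioc_of_le hT]
  simp only [intervalIntegral.integral_of_le hB]
  exact hint.integral_prod_left

/-- The local law `∂ₜe = ∂ᵣG + Q` is only assumed away from the endpoints of the `r`-interval, as
the radial equation is singular at `r = 0`. -/
lemma integral_sub_integral_eq_of_balance (hT : 0 ≤ T) (hB : 0 ≤ B)
    (hecont : ∀ t ∈ Set.Icc 0 T, ContinuousOn (e t) (Set.Icc 0 B))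
    (hdG : ContinuousOn dG.uncurry (Set.Icc 0 T ×ˢ Set.Icc 0 B))
    (hQ : ContinuousOn Q.uncurry (Set.Icc 0 T ×ˢ Set.Icc 0 B))
    (he : ∀ t ∈ Set.Icc 0 T, ∀ r ∈ Set.Ioo 0 B,
      HasDerivAt (fun s => e s r) (dG t r + Q t r) t)
    (hG : ∀ t ∈ Set.Icc 0 T, ∀ r ∈ Set.Icc 0 B, HasDerivAt (G t) (dG t r) r)
    (hflux : ∀ t ∈ Set.Icc 0 T, G t B = G t 0) :
    (∫ r in (0 : ℝ)..B, e T r) - ∫ r in (0 : ℝ)..B, e 0 r =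
      ∫ t in (0 : ℝ)..T, ∫ r in (0 : ℝ)..B, Q t r := by
  have hint (t : ℝ) (ht : t ∈ Set.Icc 0 T) : IntervalIntegrable (e t) volume 0 B :=
    (hecont t ht).intervalIntegrable_of_Icc hB
  have htime (r : ℝ) (hr : r ∈ Set.Ioo 0 B) :
      e T r - e 0 r = ∫ t in (0 : ℝ)..T, (dG t r + Q t r) := by
    refine (intervalIntegral.integral_eq_sub_of_hasDerivAt (f := fun t => e t r)
      (fun t ht => he t (Set.uIcc_of_le hT ▸ ht) r hr) ?_).symm
    exact ((hdG.add hQ).comp (Continuous.prodMk_left r).continuousOn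
      fun t ht => ⟨ht, Set.Ioo_subset_Icc_self hr⟩).intervalIntegrable_of_Icc hT
  have hspace (t : ℝ) (ht : t ∈ Set.Icc 0 T) :
      ∫ r in (0 : ℝ)..B, (dG t r + Q t r) = ∫ r in (0 : ℝ)..B, Q t r := by
    have hdGt := intervalIntegrable_slice hB hdG ht
    rw [intervalIntegral.integral_add hdGt (intervalIntegrable_slice hB hQ ht),
      intervalIntegral.integral_eq_sub_of_hasDerivAt
        (fun r hr => hG t ht r (Set.uIcc_of_le hB ▸ hr)) hdGt, hflux t ht, sub_self, zero_add]
  calc (∫ r in (0 : ℝ)..B, e T r) - ∫ r in (0 : ℝ)..B, e 0 r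
      = ∫ r in (0 : ℝ)..B, (e T r - e 0 r) :=
        (intervalIntegral.integral_sub (hint T (Set.right_mem_Icc.2 hT))
          (hint 0 (Set.left_mem_Icc.2 hT))).symm
    _ = ∫ r in (0 : ℝ)..B, ∫ t in (0 : ℝ)..T, (dG t r + Q t r) := by
        simp only [intervalIntegral.integral_of_le hB, integral_Ioc_eq_integral_Ioo]
        exact setIntegral_congr_fun measurableSet_Ioo htime
    _ = ∫ t in (0 : ℝ)..T, ∫ r in (0 : ℝ)..B, (dG t r + Q t r) := by
        refine (intervalIntegral_intervalIntegral_swap ?_).symm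
        rw [Set.uIoc_of_le hT, Set.uIoc_of_le hB]
        exact integrableOn_of_continuousOn_rectangle (hdG.add hQ)
    _ = ∫ t in (0 : ℝ)..T, ∫ r in (0 : ℝ)..B, Q t r :=
        intervalIntegral.integral_congr fun t ht => hspace t (Set.uIcc_of_le hT ▸ ht)

end BalanceLaw

section Identities

variable {f : ℝ → ℝ} {φ : ℝ → ℝ → ℝ} {T B : ℝ}

/-- The energy density of the reduced field `u = r φ`. Its integral over `(0,∞)` is the energy of
the field on `ℝ³` divided by `4π`. -/
def energyDensity (f : ℝ → ℝ) (φ : ℝ → ℝ → ℝ) (t r : ℝ) : ℝ :=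
  (pt (reduced φ) t r ^ 2 + pr (reduced φ) t r ^ 2) / 2 + r ^ 2 * pot f (φ t r)

lemma IsRadialWave.hasDerivAt_energyDensity (h : IsRadialWave f φ) (hf : Continuous f) {t r : ℝ}
    (ht : 0 ≤ t) (hr : 0 < r) :
    HasDerivAt (fun s => energyDensity f φ s r)
      (pr (pt (reduced φ)) t r * pr (reduced φ) t r +
        pt (reduced φ) t r * prr (reduced φ) t r) t := by
  have hu := contDiff_reduced h.contDiff
  have hut := hasDerivAt_pt (contDiff_pt hu) t r
  have hur := hasDerivAt_pt (contDiff_pr hu) t r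
  have hpot := (hasDerivAt_pot hf (φ t r)).comp t (hasDerivAt_pt h.contDiff_one t r)
  refine (((hut.fun_pow 2).fun_add (hur.fun_pow 2)).div_const 2 |>.fun_add
    (hpot.const_mul (r ^ 2))).congr_deriv ?_
  change (_ * _ * ptt (reduced φ) t r + _) / 2 + _ = _
  rw [pt_pr_comm hu, h.ptt_reduced_eq ht hr, pt_reduced h.contDiff_one]
  push_cast
  ring

lemma continuous_uncurry_energyDensity (hφ : ContDiff ℝ 1 φ.uncurry) (hf : Continuous f) :
    Continuous (energyDensity f φ).uncurry := by
  have hut := continuous_uncurry_pt (contDiff_reduced hφ)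
  have hur := continuous_uncurry_pr (contDiff_reduced hφ)
  exact (((hut.pow 2).add (hur.pow 2)).div_const 2).add
    ((continuous_snd.pow 2).mul ((continuous_pot hf).comp hφ.continuous))

theorem IsRadialWave.integral_energyDensity_eq (h : IsRadialWave f φ) (hf : Continuous f)
    (hT : 0 ≤ T) (hB : 0 ≤ B) (hboundary : ∀ t ∈ Set.Icc 0 T, pt (reduced φ) t B = 0) :
    ∫ r in (0 : ℝ)..B, energyDensity f φ T r = ∫ r in (0 : ℝ)..B, energyDensity f φ 0 r := by
  have hu := contDiff_reduced h.contDiff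
  have hu1 := contDiff_reduced h.contDiff_one
  have hbalance := integral_sub_integral_eq_of_balance (e := energyDensity f φ)
    (G := fun t r => pt (reduced φ) t r * pr (reduced φ) t r)
    (dG := fun t r => pr (pt (reduced φ)) t r * pr (reduced φ) t r +
      pt (reduced φ) t r * prr (reduced φ) t r) (Q := fun _ _ => 0) hT hB
    (fun t _ => ((continuous_uncurry_energyDensity h.contDiff_one hf).comp
      (Continuous.prodMk_right t)).continuousOn)
    (((continuous_uncurry_pr (contDiff_pt hu)).mul (continuous_uncurry_pr hu1)).add
      ((continuous_uncurry_pt hu1).mul (continuous_uncurry_pr (contDiff_pr hu)))).continuousOn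
    continuousOn_const
    (fun t ht r hr => by simpa using! h.hasDerivAt_energyDensity hf ht.1 hr.1)
    (fun t _ r _ => (hasDerivAt_pr (contDiff_pt hu) t r).mul (hasDerivAt_pr (contDiff_pr hu) t r))
    (fun t ht => by simp [hboundary t ht, pt_reduced h.contDiff_one])
  simpa [sub_eq_zero] using hbalance

lemma continuousOn_comp_snd {w : ℝ → ℝ} (hw : ContinuousOn w (Set.Ici 0)) :
    ContinuousOn (fun z : ℝ × ℝ => w z.2) (Set.univ ×ˢ Set.Ici 0) :=
  hw.comp continuousOn_snd fun _ hz => hz.2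

/-- A multiplier `a ∂ᵣu + b u` for the equation of the reduced field, together with the derivatives
`a'`, `b'`, `b''` of its coefficients on `[0,∞)`. Negative radii are irrelevant. -/
structure VirialMultiplier where
  a : ℝ → ℝ
  a' : ℝ → ℝ
  b : ℝ → ℝ
  b' : ℝ → ℝ
  b'' : ℝ → ℝ
  a_zero : a 0 = 0
  hasDerivAt_a : ∀ r, 0 ≤ r → HasDerivAt a (a' r) r
  hasDerivAt_b : ∀ r, 0 ≤ r → HasDerivAt b (b' r) r
  hasDerivAt_b' : ∀ r, 0 ≤ r → HasDerivAt b' (b'' r) r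
  continuousOn_a' : ContinuousOn a' (Set.Ici 0)
  continuousOn_b'' : ContinuousOn b'' (Set.Ici 0)

namespace VirialMultiplier

variable (m : VirialMultiplier)

/-- The integrand of the virial functional `∫ (a ∂ᵣu + b u) ∂ₜu dr`. -/
def density (φ : ℝ → ℝ → ℝ) (t r : ℝ) : ℝ :=
  (m.a r * pr (reduced φ) t r + m.b r * reduced φ t r) * pt (reduced φ) t r

/-- The flux in the local virial identity `∂ₜ density = ∂ᵣ flux + bulk`. -/
def flux (f : ℝ → ℝ) (φ : ℝ → ℝ → ℝ) (t r : ℝ) : ℝ :=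
  m.a r / 2 * (pt (reduced φ) t r ^ 2 + pr (reduced φ) t r ^ 2) +
    m.b r * (reduced φ t r * pr (reduced φ) t r) - m.b' r / 2 * reduced φ t r ^ 2 -
    m.a r * r ^ 2 * pot f (φ t r)

/-- The source term in the local virial identity `∂ₜ density = ∂ᵣ flux + bulk`. -/
def bulk (f : ℝ → ℝ) (φ : ℝ → ℝ → ℝ) (t r : ℝ) : ℝ :=
  (m.b r - m.a' r / 2) * pt (reduced φ) t r ^ 2 - (m.b r + m.a' r / 2) * pr (reduced φ) t r ^ 2 +
    m.b'' r / 2 * reduced φ t r ^ 2 + (m.a' r * r ^ 2 + 2 * m.a r * r) * pot f (φ t r) -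
    (m.a r * r + m.b r * r ^ 2) * (φ t r * f (φ t r))

/-- The `r`-derivative of `VirialMultiplier.flux`. -/
def fluxDeriv (f : ℝ → ℝ) (φ : ℝ → ℝ → ℝ) (t r : ℝ) : ℝ :=
  m.a' r / 2 * (pt (reduced φ) t r ^ 2 + pr (reduced φ) t r ^ 2) +
    m.a r * (pt (reduced φ) t r * pr (pt (reduced φ)) t r +
      pr (reduced φ) t r * prr (reduced φ) t r) +
    m.b r * (pr (reduced φ) t r ^ 2 + reduced φ t r * prr (reduced φ) t r) -
    m.b'' r / 2 * reduced φ t r ^ 2 - (m.a' r * r ^ 2 + 2 * m.a r * r) * pot f (φ t r) -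
    m.a r * r ^ 2 * (f (φ t r) * pr φ t r)

lemma hasDerivAt_flux (hf : Continuous f) (hφ : ContDiff ℝ 2 φ.uncurry) {t r : ℝ} (hr : 0 ≤ r) :
    HasDerivAt (m.flux f φ t) (m.fluxDeriv f φ t r) r := by
  have hu := contDiff_reduced hφ
  have hφ1 : ContDiff ℝ 1 φ.uncurry := hφ.of_le (by norm_num)
  have ha := m.hasDerivAt_a r hr
  have hvalue := hasDerivAt_pr (contDiff_reduced hφ1) t r
  have hut := hasDerivAt_pr (contDiff_pt hu) t r
  have hur : HasDerivAt _ (prr (reduced φ) t r) r := hasDerivAt_pr (contDiff_pr hu) t r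
  have hpot := (hasDerivAt_pot hf (φ t r)).comp r (hasDerivAt_pr hφ1 t r)
  refine ((ha.div_const 2).fun_mul ((hut.fun_pow 2).fun_add (hur.fun_pow 2)) |>.fun_add
    ((m.hasDerivAt_b r hr).fun_mul (hvalue.fun_mul hur)) |>.fun_sub
    (((m.hasDerivAt_b' r hr).div_const 2).fun_mul (hvalue.fun_pow 2)) |>.fun_sub
    ((ha.fun_mul (hasDerivAt_pow 2 r)).fun_mul hpot)).congr_deriv ?_
  rw [fluxDeriv, Function.comp_apply]
  push_cast
  ring

lemma hasDerivAt_density (h : IsRadialWave f φ) {t r : ℝ} (ht : 0 ≤ t) (hr : 0 < r) :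
    HasDerivAt (fun s => m.density φ s r) (m.fluxDeriv f φ t r + m.bulk f φ t r) t := by
  have hu := contDiff_reduced h.contDiff
  have hvalue := hasDerivAt_pt (contDiff_reduced h.contDiff_one) t r
  have hut : HasDerivAt _ (ptt (reduced φ) t r) t := hasDerivAt_pt (contDiff_pt hu) t r
  have hur := hasDerivAt_pt (contDiff_pr hu) t r
  refine (((hur.const_mul (m.a r)).fun_add (hvalue.const_mul (m.b r))).fun_mul hut).congr_deriv ?_
  rw [pt_pr_comm hu, h.ptt_reduced_eq ht hr, fluxDeriv, bulk, pr_reduced h.contDiff_one]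
  unfold reduced
  ring

lemma continuousOn_a : ContinuousOn m.a (Set.Ici 0) :=
  fun r hr => (m.hasDerivAt_a r hr).continuousAt.continuousWithinAt

lemma continuousOn_b : ContinuousOn m.b (Set.Ici 0) :=
  fun r hr => (m.hasDerivAt_b r hr).continuousAt.continuousWithinAt

lemma continuousOn_density (hφ : ContDiff ℝ 1 φ.uncurry) :
    ContinuousOn (m.density φ).uncurry (Set.univ ×ˢ Set.Ici 0) := by
  have hu := contDiff_reduced hφ
  exact (((continuousOn_comp_snd m.continuousOn_a).mul
    (continuous_uncurry_pr hu).continuousOn).add ((continuousOn_comp_snd m.continuousOn_b).mul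
      hu.continuous.continuousOn)).mul (continuous_uncurry_pt hu).continuousOn

lemma continuousOn_bulk (hf : Continuous f) (hφ : ContDiff ℝ 1 φ.uncurry) :
    ContinuousOn (m.bulk f φ).uncurry (Set.univ ×ˢ Set.Ici 0) := by
  have ha := continuousOn_comp_snd m.continuousOn_a
  have ha' := continuousOn_comp_snd m.continuousOn_a'
  have hb := continuousOn_comp_snd m.continuousOn_b
  have hb'' := continuousOn_comp_snd m.continuousOn_b''
  have hvalue : Continuous fun z : ℝ × ℝ => φ z.1 z.2 := hφ.continuous
  have hut : Continuous fun z : ℝ × ℝ => pt (reduced φ) z.1 z.2 :=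
    continuous_uncurry_pt (contDiff_reduced hφ)
  have hur : Continuous fun z : ℝ × ℝ => pr (reduced φ) z.1 z.2 :=
    continuous_uncurry_pr (contDiff_reduced hφ)
  have hpot := continuous_pot hf
  unfold Function.uncurry bulk reduced
  fun_prop

lemma continuousOn_fluxDeriv (hf : Continuous f) (hφ : ContDiff ℝ 2 φ.uncurry) :
    ContinuousOn (m.fluxDeriv f φ).uncurry (Set.univ ×ˢ Set.Ici 0) := by
  have hu := contDiff_reduced hφ
  have hu1 : ContDiff ℝ 1 (reduced φ).uncurry := hu.of_le (by norm_num)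
  have ha := continuousOn_comp_snd m.continuousOn_a
  have ha' := continuousOn_comp_snd m.continuousOn_a'
  have hb := continuousOn_comp_snd m.continuousOn_b
  have hb'' := continuousOn_comp_snd m.continuousOn_b''
  have hvalue : Continuous fun z : ℝ × ℝ => φ z.1 z.2 := hφ.continuous
  have hφr : Continuous fun z : ℝ × ℝ => pr φ z.1 z.2 :=
    continuous_uncurry_pr (hφ.of_le (by norm_num))
  have hut : Continuous fun z : ℝ × ℝ => pt (reduced φ) z.1 z.2 := continuous_uncurry_pt hu1
  have hur : Continuous fun z : ℝ × ℝ => pr (reduced φ) z.1 z.2 := continuous_uncurry_pr hu1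
  have hutr : Continuous fun z : ℝ × ℝ => pr (pt (reduced φ)) z.1 z.2 :=
    continuous_uncurry_pr (contDiff_pt hu)
  have hurr : Continuous fun z : ℝ × ℝ => prr (reduced φ) z.1 z.2 :=
    continuous_uncurry_pr (contDiff_pr hu)
  have hpot := continuous_pot hf
  unfold Function.uncurry fluxDeriv reduced at *
  fun_prop

theorem integral_density_sub_integral_density_eq (h : IsRadialWave f φ) (hf : Continuous f)
    (hT : 0 ≤ T) (hB : 0 ≤ B) (hφB : ∀ t ∈ Set.Icc 0 T, φ t B = 0)
    (hutB : ∀ t ∈ Set.Icc 0 T, pt (reduced φ) t B = 0)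
    (hurB : ∀ t ∈ Set.Icc 0 T, pr (reduced φ) t B = 0) :
    (∫ r in (0 : ℝ)..B, m.density φ T r) - ∫ r in (0 : ℝ)..B, m.density φ 0 r =
      ∫ t in (0 : ℝ)..T, ∫ r in (0 : ℝ)..B, m.bulk f φ t r := by
  have hrect : Set.Icc 0 T ×ˢ Set.Icc 0 B ⊆ Set.univ ×ˢ Set.Ici (0 : ℝ) :=
    Set.prod_mono (Set.subset_univ _) Set.Icc_subset_Ici_self
  refine integral_sub_integral_eq_of_balance (G := m.flux f φ) (dG := m.fluxDeriv f φ) hT hB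
    (fun t _ => (m.continuousOn_density h.contDiff_one).comp
      (Continuous.prodMk_right t).continuousOn fun r hr => ⟨Set.mem_univ t, hr.1⟩)
    ((m.continuousOn_fluxDeriv hf h.contDiff).mono hrect)
    ((m.continuousOn_bulk hf h.contDiff_one).mono hrect)
    (fun t ht r hr => m.hasDerivAt_density h ht.1 hr.1)
    (fun t _ r hr => m.hasDerivAt_flux hf h.contDiff hr.1) fun t ht => ?_
  simp [flux, reduced, pot, m.a_zero, hφB t ht, hutB t ht, hurB t ht]

end VirialMultiplier

end Identities

section MorawetzEstimate

variable {f : ℝ → ℝ} {φ : ℝ → ℝ → ℝ} {C ε B t r : ℝ}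

/-- The multiplier with `a = -r / (1 + r)` and `b = a' / 2 + (1 + r)⁻⁴ / 8`. With `b = a' / 2` the
bulk would control `∂ᵣu` only; the correction adds control of `∂ₜu`, at the expense of a small
fraction of `∂ᵣu`. -/
def morawetzMultiplier : VirialMultiplier where
  a r := -(r / (1 + r) ^ 1)
  a' r := -(1 / (1 + r) ^ 2)
  b r := 1 / 8 / (1 + r) ^ 4 - 1 / 2 / (1 + r) ^ 2
  b' r := 1 / (1 + r) ^ 3 - 1 / 2 / (1 + r) ^ 5
  b'' r := 5 / 2 / (1 + r) ^ 6 - 3 / (1 + r) ^ 4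
  a_zero := by simp
  hasDerivAt_a r hr := by
    refine (hasDerivAt_div_one_add_pow (hasDerivAt_id' r) hr 1).fun_neg.congr_deriv ?_
    field_simp
    ring
  hasDerivAt_b r hr := by
    refine ((hasDerivAt_div_one_add_pow (hasDerivAt_const r _) hr 4).fun_sub
      (hasDerivAt_div_one_add_pow (hasDerivAt_const r _) hr 2)).congr_deriv ?_
    ring
  hasDerivAt_b' r hr := by
    refine ((hasDerivAt_div_one_add_pow (hasDerivAt_const r _) hr 3).fun_sub
      (hasDerivAt_div_one_add_pow (hasDerivAt_const r _) hr 5)).congr_deriv ?_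
    ring
  continuousOn_a' r hr := (hasDerivAt_div_one_add_pow (hasDerivAt_const r _) hr
    2).fun_neg.continuousAt.continuousWithinAt
  continuousOn_b'' r hr := ((hasDerivAt_div_one_add_pow (hasDerivAt_const r _) hr 6).fun_sub
    (hasDerivAt_div_one_add_pow (hasDerivAt_const r _) hr 4)).continuousAt.continuousWithinAt

lemma morawetz_bulk_ge (hr : 0 ≤ r) (hsign : 0 ≤ φ t r * f (φ t r)) :
    1 / 8 * (pt (reduced φ) t r ^ 2 / (1 + r) ^ 4) +
      7 / 8 * (pr (reduced φ) t r ^ 2 / (1 + r) ^ 2) - 3 / 2 * (reduced φ t r ^ 2 / (1 + r) ^ 4) -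
      (r ^ 2 / (1 + r) ^ 2 + 2 * (r ^ 2 / (1 + r))) * pot f (φ t r) ≤
      morawetzMultiplier.bulk f φ t r := by
  have hur : 0 ≤ (1 + r) ^ 2 - 1 := by nlinarith
  have hdiff : 0 ≤ 1 / 8 * ((1 + r) ^ 2 - 1) / (1 + r) ^ 4 * pr (reduced φ) t r ^ 2 +
      5 / 4 / (1 + r) ^ 6 * reduced φ t r ^ 2 +
      r ^ 2 * (7 / 8 + 1 / 8 * (1 - 1 / (1 + r) ^ 3) + 1 / 2 / (1 + r)) / (1 + r) *
        (φ t r * f (φ t r)) := by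
    have hinv : 0 ≤ 1 - 1 / (1 + r) ^ 3 := by
      rw [sub_nonneg, div_le_one (by positivity)]
      exact one_le_pow₀ (by linarith)
    positivity
  refine sub_nonneg.1 (hdiff.trans_eq ?_)
  simp only [VirialMultiplier.bulk, morawetzMultiplier]
  field_simp
  ring

lemma potential_term_le (hC : 0 ≤ C) (hr : 0 ≤ r) (hsup : |φ t r| ≤ ε)
    (hpot : pot f (φ t r) ≤ C * φ t r ^ 4) :
    (r ^ 2 / (1 + r) ^ 2 + 2 * (r ^ 2 / (1 + r))) * pot f (φ t r) ≤
      12 * (C * ε ^ 2) * (reduced φ t r ^ 2 / (1 + r) ^ 4) +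
        12 * C * (reduced φ t r ^ 4 / (1 + r) ^ 3) := by
  have hφε : φ t r ^ 2 ≤ ε ^ 2 := sq_le_sq.2 (hsup.trans (le_abs_self ε))
  have hweight : r ^ 2 / (1 + r) ^ 2 ≤ r ^ 2 / (1 + r) := by
    gcongr
    nlinarith
  have hcube : (1 + r) ^ 3 ≤ 4 + 4 * r ^ 2 * (1 + r) := by
    nlinarith [mul_nonneg hr (sq_nonneg (r - 1)), sq_nonneg (r - 1)]
  calc (r ^ 2 / (1 + r) ^ 2 + 2 * (r ^ 2 / (1 + r))) * pot f (φ t r)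
      ≤ (r ^ 2 / (1 + r) + 2 * (r ^ 2 / (1 + r))) * (C * φ t r ^ 4) := by
        refine (mul_le_mul_of_nonneg_left hpot (by positivity)).trans ?_
        gcongr
    _ = 3 * C * (r ^ 2 * φ t r ^ 4) * (1 + r) ^ 3 / (1 + r) ^ 4 := by
        field_simp
        ring
    _ ≤ 3 * C * (r ^ 2 * φ t r ^ 4) * (4 + 4 * r ^ 2 * (1 + r)) / (1 + r) ^ 4 := by gcongr
    _ = 12 * (C * φ t r ^ 2) * (reduced φ t r ^ 2 / (1 + r) ^ 4) +
        12 * C * (reduced φ t r ^ 4 / (1 + r) ^ 3) := by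
        unfold reduced
        field_simp
        ring
    _ ≤ _ := by gcongr

lemma hasDerivAt_pr_reduced (hφ : ContDiff ℝ 1 φ.uncurry) (t r : ℝ) :
    HasDerivAt (reduced φ t) (pr (reduced φ) t r) r :=
  hasDerivAt_pr (contDiff_reduced hφ) t r

lemma continuous_slice {g : ℝ → ℝ → ℝ} (hg : Continuous g.uncurry) (t : ℝ) : Continuous (g t) :=
  hg.comp (Continuous.prodMk_right t)

lemma integral_morawetz_bulk_add_ge (hf : Continuous f) (hφ : ContDiff ℝ 1 φ.uncurry)
    (hB : 0 ≤ B) (hC : 0 ≤ C) (hsign : ∀ r ∈ Set.Icc 0 B, 0 ≤ φ t r * f (φ t r))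
    (hpot : ∀ r ∈ Set.Icc 0 B, pot f (φ t r) ≤ C * φ t r ^ 4)
    (hsup : ∀ r ∈ Set.Icc 0 B, |φ t r| ≤ ε) :
    1 / 8 * (∫ r in (0 : ℝ)..B, pt (reduced φ) t r ^ 2 / (1 + r) ^ 4) +
      7 / 8 * (∫ r in (0 : ℝ)..B, pr (reduced φ) t r ^ 2 / (1 + r) ^ 2) ≤
      (∫ r in (0 : ℝ)..B, morawetzMultiplier.bulk f φ t r) +
        (3 / 2 + 12 * (C * ε ^ 2)) * (∫ r in (0 : ℝ)..B, reduced φ t r ^ 2 / (1 + r) ^ 4) +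
        12 * C * ∫ r in (0 : ℝ)..B, reduced φ t r ^ 4 / (1 + r) ^ 3 := by
  have hu := contDiff_reduced hφ
  have hvalue := continuous_slice hu.continuous t
  have hut := continuous_slice (continuous_uncurry_pt hu) t
  have hur := continuous_slice (continuous_uncurry_pr hu) t
  have hbulk : IntervalIntegrable (morawetzMultiplier.bulk f φ t) volume 0 B :=
    ((morawetzMultiplier.continuousOn_bulk hf hφ).comp (Continuous.prodMk_right t).continuousOn
      fun r hr => ⟨Set.mem_univ t, hr.1⟩).intervalIntegrable_of_Icc hB
  have hut2 := (intervalIntegrable_div_one_add_pow (hut.pow 2) hB 4).const_mul (1 / 8)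
  have hur2 := (intervalIntegrable_div_one_add_pow (hur.pow 2) hB 2).const_mul (7 / 8)
  have hu2 := (intervalIntegrable_div_one_add_pow (hvalue.pow 2) hB 4).const_mul
    (3 / 2 + 12 * (C * ε ^ 2))
  have hu4 := (intervalIntegrable_div_one_add_pow (hvalue.pow 4) hB 3).const_mul (12 * C)
  have hintegrated := intervalIntegral.integral_mono_on hB (hut2.add hur2)
    ((hbulk.add hu2).add hu4) fun r hr => by
      have hge := morawetz_bulk_ge (r := r) hr.1 (hsign r hr)
      have hle := potential_term_le hC hr.1 (hsup r hr) (hpot r hr)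
      simp only [Pi.pow_apply]
      linarith
  rw [intervalIntegral.integral_add hut2 hur2, intervalIntegral.integral_add (hbulk.add hu2) hu4,
    intervalIntegral.integral_add hbulk hu2] at hintegrated
  simpa only [intervalIntegral.integral_const_mul] using! hintegrated

/-- The two lower-order terms are absorbed by Hardy's inequality and by the smallness of `C ε²`. -/
lemma integral_morawetz_bulk_ge (hf : Continuous f) (hφ : ContDiff ℝ 1 φ.uncurry) (hB : 0 ≤ B)
    (hC : 0 ≤ C) (hCε : C * ε ^ 2 ≤ 1 / 288)
    (hsign : ∀ r ∈ Set.Icc 0 B, 0 ≤ φ t r * f (φ t r))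
    (hpot : ∀ r ∈ Set.Icc 0 B, pot f (φ t r) ≤ C * φ t r ^ 4)
    (hsup : ∀ r ∈ Set.Icc 0 B, |φ t r| ≤ ε)
    (hmass : ∫ r in (0 : ℝ)..B, reduced φ t r ^ 2 ≤ ε ^ 2) :
    1 / 8 * (∫ r in (0 : ℝ)..B, pt (reduced φ) t r ^ 2 / (1 + r) ^ 4) +
      1 / 16 * (∫ r in (0 : ℝ)..B, pr (reduced φ) t r ^ 2 / (1 + r) ^ 2) ≤
      ∫ r in (0 : ℝ)..B, morawetzMultiplier.bulk f φ t r := by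
  have hcoercive := integral_morawetz_bulk_add_ge hf hφ hB hC hsign hpot hsup
  have hur := continuous_slice (continuous_uncurry_pr (contDiff_reduced hφ)) t
  have hhardy := integral_sq_div_le_integral_deriv_sq (hasDerivAt_pr_reduced hφ t) hur
    (zero_mul _) hB 2
  have hquartic := integral_pow_four_div_le (hasDerivAt_pr_reduced hφ t) hur (zero_mul _) hB 2
  have hU := integral_sq_div_one_add_pow_nonneg (reduced φ t) hB 4
  have hD := integral_sq_div_one_add_pow_nonneg (pr (reduced φ) t) hB 2
  set U := ∫ r in (0 : ℝ)..B, reduced φ t r ^ 2 / (1 + r) ^ 4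
  set D := ∫ r in (0 : ℝ)..B, pr (reduced φ) t r ^ 2 / (1 + r) ^ 2
  set V := ∫ r in (0 : ℝ)..B, reduced φ t r ^ 4 / (1 + r) ^ 3
  have hVD : C * V ≤ 1 / 288 * D :=
    calc C * V ≤ C * (D * ε ^ 2) :=
          mul_le_mul_of_nonneg_left (hquartic.trans (mul_le_mul_of_nonneg_left hmass hD)) hC
      _ = C * ε ^ 2 * D := by ring
      _ ≤ 1 / 288 * D := mul_le_mul_of_nonneg_right hCε hD
  have hUD : C * ε ^ 2 * U ≤ 1 / 288 * U := mul_le_mul_of_nonneg_right hCε hU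
  push_cast at hhardy
  linarith

/-- The integrand of `‖φ‖²_{H¹_w} + ‖∂ₜφ‖²_{L²_w}`. -/
def weightedDensity (φ : ℝ → ℝ → ℝ) (t r : ℝ) : ℝ :=
  (r ^ 2 / (1 + r) ^ 4) * ((φ t r) ^ 2 + (pr φ t r) ^ 2 + (pt φ t r) ^ 2)

lemma weightedDensity_le (hφ : ContDiff ℝ 1 φ.uncurry) (hr : 0 ≤ r) :
    weightedDensity φ t r ≤
      reduced φ t r ^ 2 / (1 + r) ^ 4 + 2 * (φ t r ^ 2 / (1 + r) ^ 4) +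
        2 * (pr (reduced φ) t r ^ 2 / (1 + r) ^ 4) + pt (reduced φ) t r ^ 2 / (1 + r) ^ 4 := by
  have hdiff : 0 ≤ (φ t r + pr (reduced φ) t r) ^ 2 / (1 + r) ^ 4 := by positivity
  refine sub_nonneg.1 (hdiff.trans_eq ?_)
  rw [weightedDensity, pr_reduced hφ, pt_reduced hφ, reduced]
  field_simp
  ring

lemma continuousOn_weightedDensity (hφ : ContDiff ℝ 1 φ.uncurry) :
    ContinuousOn (weightedDensity φ).uncurry (Set.univ ×ˢ Set.Ici 0) := by
  have hweight : ContinuousOn (fun r : ℝ => r ^ 2 / (1 + r) ^ 4) (Set.Ici 0) :=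
    fun r hr => (hasDerivAt_div_one_add_pow (hasDerivAt_pow 2 r) hr
      4).continuousAt.continuousWithinAt
  exact (continuousOn_comp_snd hweight).mul (((hφ.continuous.pow 2).add
    ((continuous_uncurry_pr hφ).pow 2)).add ((continuous_uncurry_pt hφ).pow 2)).continuousOn

lemma weightedDensity_nonneg (φ : ℝ → ℝ → ℝ) (t r : ℝ) : 0 ≤ weightedDensity φ t r := by
  rw [weightedDensity]
  positivity

lemma integral_weightedDensity_le (hφ : ContDiff ℝ 1 φ.uncurry) (hB : 0 ≤ B) :
    ∫ r in (0 : ℝ)..B, weightedDensity φ t r ≤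
      (∫ r in (0 : ℝ)..B, pt (reduced φ) t r ^ 2 / (1 + r) ^ 4) +
        21 / 2 * ∫ r in (0 : ℝ)..B, pr (reduced φ) t r ^ 2 / (1 + r) ^ 2 := by
  have hu := contDiff_reduced hφ
  have hur := continuous_slice (continuous_uncurry_pr hu) t
  have hdensity : IntervalIntegrable (weightedDensity φ t) volume 0 B :=
    ((continuousOn_weightedDensity hφ).comp (Continuous.prodMk_right t).continuousOn
      fun r hr => ⟨Set.mem_univ t, hr.1⟩).intervalIntegrable_of_Icc hB
  have hintegrable {w : ℝ → ℝ} (hw : Continuous w) (n : ℕ) :=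
    intervalIntegrable_div_one_add_pow (hw.pow 2) hB n
  have hu2 := hintegrable (continuous_slice hu.continuous t) 4
  have hφ2 := (hintegrable (continuous_slice hφ.continuous t) 4).const_mul 2
  have hur2 := (hintegrable hur 4).const_mul 2
  have hut2 := hintegrable (continuous_slice (continuous_uncurry_pt hu) t) 4
  have hintegrated := intervalIntegral.integral_mono_on hB hdensity
    (((hu2.add hφ2).add hur2).add hut2) fun r hr => weightedDensity_le hφ hr.1
  rw [intervalIntegral.integral_add ((hu2.add hφ2).add hur2) hut2,
    intervalIntegral.integral_add (hu2.add hφ2) hur2, intervalIntegral.integral_add hu2 hφ2,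
    intervalIntegral.integral_const_mul, intervalIntegral.integral_const_mul] at hintegrated
  have hhardy := integral_sq_div_le_integral_deriv_sq (hasDerivAt_pr_reduced hφ t) hur
    (zero_mul _) hB 2
  have hhardyOrigin := integral_sq_div_le_integral_deriv_id_mul_sq (hasDerivAt_pr hφ t)
    (continuous_slice (continuous_uncurry_pr hφ) t) hB 4
  simp only [← pr_reduced hφ] at hhardyOrigin
  have hweight : ∫ r in (0 : ℝ)..B, pr (reduced φ) t r ^ 2 / (1 + r) ^ 4 ≤
      ∫ r in (0 : ℝ)..B, pr (reduced φ) t r ^ 2 / (1 + r) ^ 2 :=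
    intervalIntegral.integral_mono_on hB (hintegrable hur 4) (hintegrable hur 2) fun r hr => by
      have hr0 : 0 ≤ r := hr.1
      gcongr <;> linarith
  simp only [Pi.pow_apply] at hintegrated
  push_cast at hhardy
  linarith

end MorawetzEstimate

section SpacetimeBound

variable {f : ℝ → ℝ} {φ : ℝ → ℝ → ℝ} {C ε N T B t r : ℝ}

/-- A radial wave of size at most `ε`, in the regime where the estimates close: along the wave the
nonlinearity is repulsive and quartically small with constant `C`, the product `C ε²` is small, and
the support lies in the light cone `r ≤ N + t`. -/
structure IsSmallRadialWave (f : ℝ → ℝ) (φ : ℝ → ℝ → ℝ) (C ε N : ℝ) : Prop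
    extends IsRadialWave f φ where
  const_nonneg : 0 ≤ C
  const_mul_sq_le : C * ε ^ 2 ≤ 1 / 288
  sign : ∀ t r : ℝ, 0 ≤ t → 0 ≤ r → 0 ≤ φ t r * f (φ t r)
  pot_nonneg : ∀ t r : ℝ, 0 ≤ t → 0 ≤ r → 0 ≤ pot f (φ t r)
  pot_le : ∀ t r : ℝ, 0 ≤ t → 0 ≤ r → pot f (φ t r) ≤ C * φ t r ^ 4
  abs_field_le : ∀ t r : ℝ, 0 ≤ t → 0 ≤ r → |φ t r| ≤ ε
  mass_le : ∀ t : ℝ, 0 ≤ t → ∫ r in Set.Ioi (0 : ℝ), reduced φ t r ^ 2 ≤ ε ^ 2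
  radius_nonneg : 0 ≤ N
  support : ∀ t r : ℝ, 0 ≤ t → N + t < r → φ t r = 0

lemma integral_Ioi_eq_intervalIntegral {g : ℝ → ℝ} (hB : 0 ≤ B) (hg : ∀ r, B < r → g r = 0) :
    ∫ r in Set.Ioi (0 : ℝ), g r = ∫ r in (0 : ℝ)..B, g r := by
  rw [intervalIntegral.integral_of_le hB]
  refine setIntegral_eq_of_subset_of_forall_sdiff_eq_zero measurableSet_Ioi
    Set.Ioc_subset_Ioi_self fun r hr => hg r ?_
  exact lt_of_not_ge fun hle => hr.2 ⟨hr.1, hle⟩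

lemma abs_morawetzMultiplier_a_le (hr : 0 ≤ r) : |morawetzMultiplier.a r| ≤ 1 := by
  change |-(r / (1 + r) ^ 1)| ≤ 1
  rw [pow_one, abs_neg, abs_of_nonneg (by positivity)]
  exact div_le_one_of_le₀ (by linarith) (by linarith)

lemma abs_morawetzMultiplier_b_le (hr : 0 ≤ r) : |morawetzMultiplier.b r| ≤ 1 / 2 := by
  have hle : 1 / 8 / (1 + r) ^ 4 ≤ 1 / 2 / (1 + r) ^ 2 := by gcongr <;> linarith
  have hlower : 0 ≤ 1 / 8 / (1 + r) ^ 4 := by positivity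
  have hupper : 1 / 2 / (1 + r) ^ 2 ≤ 1 / 2 :=
    div_le_self (by norm_num) (one_le_pow₀ (by linarith))
  change |1 / 8 / (1 + r) ^ 4 - 1 / 2 / (1 + r) ^ 2| ≤ 1 / 2
  rw [abs_le]
  constructor <;> linarith

lemma abs_morawetz_density_le (hr : 0 ≤ r) (hpot : 0 ≤ pot f (φ t r)) :
    |morawetzMultiplier.density φ t r| ≤ 2 * energyDensity f φ t r + reduced φ t r ^ 2 := by
  have henergy : pt (reduced φ) t r ^ 2 + pr (reduced φ) t r ^ 2 ≤ 2 * energyDensity f φ t r := by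
    have : 0 ≤ r ^ 2 * pot f (φ t r) := by positivity
    rw [energyDensity]
    linarith
  rw [VirialMultiplier.density, abs_mul]
  calc |morawetzMultiplier.a r * pr (reduced φ) t r + morawetzMultiplier.b r * reduced φ t r| *
        |pt (reduced φ) t r|
      ≤ (1 * |pr (reduced φ) t r| + 1 / 2 * |reduced φ t r|) * |pt (reduced φ) t r| := by
        refine mul_le_mul_of_nonneg_right ((abs_add_le _ _).trans ?_) (abs_nonneg _)
        rw [abs_mul, abs_mul]
        gcongr
        · exact abs_morawetzMultiplier_a_le hr
        · exact abs_morawetzMultiplier_b_le hr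
    _ ≤ |pt (reduced φ) t r| ^ 2 + |pr (reduced φ) t r| ^ 2 + |reduced φ t r| ^ 2 := by
        nlinarith [sq_nonneg (|pr (reduced φ) t r| - |pt (reduced φ) t r|),
          sq_nonneg (|reduced φ t r| - |pt (reduced φ) t r|), sq_nonneg |reduced φ t r|]
    _ ≤ 2 * energyDensity f φ t r + reduced φ t r ^ 2 := by
        rw [sq_abs, sq_abs, sq_abs]
        gcongr

namespace IsSmallRadialWave

lemma pr_reduced_eq_zero (h : IsSmallRadialWave f φ C ε N) (ht : 0 ≤ t) (hr : N + t < r) :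
    pr (reduced φ) t r = 0 := by
  rw [pr_reduced h.contDiff_one, h.support t r ht hr, pr_eq_zero_of_support_in_cone h.support ht hr,
    mul_zero, add_zero]

lemma pt_reduced_eq_zero (h : IsSmallRadialWave f φ C ε N) (ht : 0 ≤ t) (hr : N + t < r) :
    pt (reduced φ) t r = 0 := by
  rw [pt_reduced h.contDiff_one, pt_eq_zero_of_support_in_cone h.contDiff_one h.support ht hr,
    mul_zero]

lemma energyDensity_eq_zero (h : IsSmallRadialWave f φ C ε N) (ht : 0 ≤ t) (hr : N + t < r) :
    energyDensity f φ t r = 0 := by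
  simp [energyDensity, pot, h.pr_reduced_eq_zero ht hr, h.pt_reduced_eq_zero ht hr,
    h.support t r ht hr]

lemma weightedDensity_eq_zero (h : IsSmallRadialWave f φ C ε N) (ht : 0 ≤ t) (hr : N + t < r) :
    weightedDensity φ t r = 0 := by
  simp [weightedDensity, pr_eq_zero_of_support_in_cone h.support ht hr,
    pt_eq_zero_of_support_in_cone h.contDiff_one h.support ht hr, h.support t r ht hr]

lemma nonneg_of_cone_lt (h : IsSmallRadialWave f φ C ε N) (ht : 0 ≤ t) (hB : N + t < B) : 0 ≤ B :=
  (add_nonneg h.radius_nonneg ht).trans hB.le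

lemma integral_reduced_sq_le (h : IsSmallRadialWave f φ C ε N) (ht : 0 ≤ t) (hB : N + t < B) :
    ∫ r in (0 : ℝ)..B, reduced φ t r ^ 2 ≤ ε ^ 2 := by
  refine (integral_Ioi_eq_intervalIntegral (h.nonneg_of_cone_lt ht hB) fun r hr => ?_).symm.trans_le
    (h.mass_le t ht)
  simp [reduced, h.support t r ht (hB.trans hr)]

lemma integral_energyDensity_eq (h : IsSmallRadialWave f φ C ε N) (hf : Continuous f)
    (ht : 0 ≤ t) (hB : N + t < B) :
    ∫ r in (0 : ℝ)..B, energyDensity f φ t r =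
      ∫ r in Set.Ioi (0 : ℝ), energyDensity f φ 0 r := by
  have hB0 := h.nonneg_of_cone_lt ht hB
  rw [h.toIsRadialWave.integral_energyDensity_eq hf ht hB0
    fun s hs => h.pt_reduced_eq_zero hs.1 (by linarith [hs.2])]
  exact (integral_Ioi_eq_intervalIntegral hB0
    fun r hr => h.energyDensity_eq_zero le_rfl (by linarith)).symm

lemma abs_integral_morawetz_density_le (h : IsSmallRadialWave f φ C ε N) (hf : Continuous f)
    (ht : 0 ≤ t) (hB : N + t < B) :
    |∫ r in (0 : ℝ)..B, morawetzMultiplier.density φ t r| ≤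
      2 * (∫ r in Set.Ioi (0 : ℝ), energyDensity f φ 0 r) + ε ^ 2 := by
  have hB0 := h.nonneg_of_cone_lt ht hB
  have henergy : IntervalIntegrable (fun r => 2 * energyDensity f φ t r) volume 0 B :=
    ((continuous_slice (continuous_uncurry_energyDensity h.contDiff_one hf)
      t).intervalIntegrable 0 B).const_mul 2
  have hmass : IntervalIntegrable (fun r => reduced φ t r ^ 2) volume 0 B :=
    ((continuous_slice (contDiff_reduced h.contDiff_one).continuous t).pow 2).intervalIntegrable 0 B
  calc |∫ r in (0 : ℝ)..B, morawetzMultiplier.density φ t r|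
      ≤ ∫ r in (0 : ℝ)..B, (2 * energyDensity f φ t r + reduced φ t r ^ 2) :=
        intervalIntegral.norm_integral_le_of_norm_le (f := morawetzMultiplier.density φ t) hB0
          (.of_forall fun r hr => abs_morawetz_density_le hr.1.le (h.pot_nonneg t r ht hr.1.le))
          (henergy.add hmass)
    _ = 2 * (∫ r in Set.Ioi (0 : ℝ), energyDensity f φ 0 r) +
        ∫ r in (0 : ℝ)..B, reduced φ t r ^ 2 := by
        rw [intervalIntegral.integral_add henergy hmass, intervalIntegral.integral_const_mul,
          h.integral_energyDensity_eq hf ht hB]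
    _ ≤ _ := by
        gcongr
        exact h.integral_reduced_sq_le ht hB

lemma integral_integral_morawetz_bulk_le (h : IsSmallRadialWave f φ C ε N) (hf : Continuous f)
    (hT : 0 ≤ T) (hB : N + T < B) :
    ∫ t in (0 : ℝ)..T, ∫ r in (0 : ℝ)..B, morawetzMultiplier.bulk f φ t r ≤
      2 * (2 * (∫ r in Set.Ioi (0 : ℝ), energyDensity f φ 0 r) + ε ^ 2) := by
  have hcone (t : ℝ) (ht : t ∈ Set.Icc 0 T) : N + t < B := by linarith [ht.2]
  have hT' := h.abs_integral_morawetz_density_le hf hT hB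
  have h0 := h.abs_integral_morawetz_density_le hf le_rfl (hcone 0 (Set.left_mem_Icc.2 hT))
  rw [← morawetzMultiplier.integral_density_sub_integral_density_eq h.toIsRadialWave hf hT
    (h.nonneg_of_cone_lt hT hB) (fun t ht => h.support t B ht.1 (hcone t ht))
    (fun t ht => h.pt_reduced_eq_zero ht.1 (hcone t ht))
    (fun t ht => h.pr_reduced_eq_zero ht.1 (hcone t ht))]
  linarith [(abs_le.1 hT').2, (abs_le.1 h0).1]

lemma integral_weightedDensity_le_integral_morawetz_bulk (h : IsSmallRadialWave f φ C ε N)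
    (hf : Continuous f) (ht : 0 ≤ t) (hB : N + t < B) :
    ∫ r in (0 : ℝ)..B, weightedDensity φ t r ≤
      168 * ∫ r in (0 : ℝ)..B, morawetzMultiplier.bulk f φ t r := by
  have hB0 := h.nonneg_of_cone_lt ht hB
  have hbulk := integral_morawetz_bulk_ge hf h.contDiff_one hB0 h.const_nonneg h.const_mul_sq_le
    (fun r hr => h.sign t r ht hr.1) (fun r hr => h.pot_le t r ht hr.1)
    (fun r hr => h.abs_field_le t r ht hr.1) (h.integral_reduced_sq_le ht hB)
  have hdensity := integral_weightedDensity_le (t := t) h.contDiff_one hB0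
  have hnonneg := integral_sq_div_one_add_pow_nonneg (pt (reduced φ) t) hB0 4
  linarith

lemma integral_integral_weightedDensity_le (h : IsSmallRadialWave f φ C ε N) (hf : Continuous f)
    (hT : 0 ≤ T) (hB : N + T < B) :
    ∫ t in (0 : ℝ)..T, ∫ r in (0 : ℝ)..B, weightedDensity φ t r ≤
      168 * (2 * (2 * (∫ r in Set.Ioi (0 : ℝ), energyDensity f φ 0 r) + ε ^ 2)) := by
  have hB0 := h.nonneg_of_cone_lt hT hB
  have hrect : Set.Icc 0 T ×ˢ Set.Icc 0 B ⊆ Set.univ ×ˢ Set.Ici (0 : ℝ) :=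
    Set.prod_mono (Set.subset_univ _) Set.Icc_subset_Ici_self
  calc ∫ t in (0 : ℝ)..T, ∫ r in (0 : ℝ)..B, weightedDensity φ t r
      ≤ ∫ t in (0 : ℝ)..T, 168 * ∫ r in (0 : ℝ)..B, morawetzMultiplier.bulk f φ t r :=
        intervalIntegral.integral_mono_on hT
          (intervalIntegrable_integral_of_continuousOn_rectangle hT hB0
            ((continuousOn_weightedDensity h.contDiff_one).mono hrect))
          ((intervalIntegrable_integral_of_continuousOn_rectangle hT hB0
            ((morawetzMultiplier.continuousOn_bulk hf h.contDiff_one).mono hrect)).const_mul 168)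
          fun t ht => h.integral_weightedDensity_le_integral_morawetz_bulk hf ht.1
            (by linarith [ht.2])
    _ ≤ _ := by
        rw [intervalIntegral.integral_const_mul]
        gcongr
        exact h.integral_integral_morawetz_bulk_le hf hT hB

lemma integral_Ioi_weightedDensity_eq (h : IsSmallRadialWave f φ C ε N) (ht : t ∈ Set.Icc 0 T)
    (hB : N + T < B) :
    ∫ r in Set.Ioi (0 : ℝ), weightedDensity φ t r = ∫ r in (0 : ℝ)..B, weightedDensity φ t r :=
  have hcone : N + t < B := by linarith [ht.2]
  integral_Ioi_eq_intervalIntegral (h.nonneg_of_cone_lt ht.1 hcone)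
    fun _ hr => h.weightedDensity_eq_zero ht.1 (hcone.trans hr)

lemma intervalIntegrable_integral_Ioi_weightedDensity (h : IsSmallRadialWave f φ C ε N)
    (hT : 0 ≤ T) :
    IntervalIntegrable (fun t => ∫ r in Set.Ioi (0 : ℝ), weightedDensity φ t r) volume 0 T := by
  refine (intervalIntegrable_integral_of_continuousOn_rectangle hT
    (h.nonneg_of_cone_lt hT (lt_add_one _)) ((continuousOn_weightedDensity h.contDiff_one).mono
      (Set.prod_mono (Set.subset_univ _) Set.Icc_subset_Ici_self))).congr fun t ht => ?_
  rw [Set.uIoc_of_le hT] at ht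
  exact (h.integral_Ioi_weightedDensity_eq (Set.Ioc_subset_Icc_self ht) (lt_add_one _)).symm

theorem integrableOn_integral_weightedDensity (h : IsSmallRadialWave f φ C ε N)
    (hf : Continuous f) :
    IntegrableOn (fun t => ∫ r in Set.Ioi (0 : ℝ), weightedDensity φ t r) (Set.Ioi 0) := by
  have hnonneg (t : ℝ) : 0 ≤ ∫ r in Set.Ioi (0 : ℝ), weightedDensity φ t r :=
    integral_nonneg (weightedDensity_nonneg φ t)
  refine integrableOn_Ioi_of_intervalIntegral_norm_bounded
    (168 * (2 * (2 * (∫ r in Set.Ioi (0 : ℝ), energyDensity f φ 0 r) + ε ^ 2))) 0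
    (fun n : ℕ => (h.intervalIntegrable_integral_Ioi_weightedDensity n.cast_nonneg).1)
    tendsto_natCast_atTop_atTop (.of_forall fun n => ?_)
  have hn : (0 : ℝ) ≤ n := n.cast_nonneg
  refine (intervalIntegral.integral_congr fun t ht => ?_).trans_le
    (h.integral_integral_weightedDensity_le hf hn (lt_add_one _))
  rw [Set.uIcc_of_le hn] at ht
  exact (Real.norm_of_nonneg (hnonneg t)).trans
    (h.integral_Ioi_weightedDensity_eq ht (lt_add_one _))

end IsSmallRadialWave

end SpacetimeBound

section SmallData

variable {f : ℝ → ℝ} {φ : ℝ → ℝ → ℝ} {C δ ε : ℝ}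

lemma IsRadialWave.exists_isSmallRadialWave (h : IsRadialWave f φ) (hf : Continuous f) (hδ : 0 < δ)
    (hgrowth : ∀ s ∈ Set.Ioo (-δ) δ, 0 ≤ s * f s ∧ s * f s ≤ C * s ^ 4)
    (hεδ : ε < δ) (hCε : C * ε ^ 2 ≤ 1 / 288)
    (hsup : ∀ t r : ℝ, 0 ≤ t → 0 ≤ r → |φ t r| ≤ ε)
    (hmass : ∀ t : ℝ, 0 ≤ t → ∫ r in Set.Ioi (0 : ℝ), reduced φ t r ^ 2 ≤ ε ^ 2) :
    ∃ N, IsSmallRadialWave f φ C ε N := by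
  have hC := nonneg_of_growth hδ hgrowth
  have hsmall (t r : ℝ) (ht : 0 ≤ t) (hr : 0 ≤ r) : |φ t r| < δ := (hsup t r ht hr).trans_lt hεδ
  have hcubic (s : ℝ) (hs : |s| < δ) : |f s| ≤ C * |s| ^ 3 :=
    abs_le_mul_abs_cube_of_growth hf hδ hgrowth hs
  have hlinear (t r : ℝ) (ht : 0 ≤ t) (hr : 0 < r) : |f (φ t r)| ≤ C * ε ^ 2 * |φ t r| :=
    calc |f (φ t r)| ≤ C * |φ t r| ^ 3 := hcubic _ (hsmall t r ht hr.le)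
      _ = C * |φ t r| ^ 2 * |φ t r| := by ring
      _ ≤ C * ε ^ 2 * |φ t r| := by
        gcongr
        exact hsup t r ht hr.le
  obtain ⟨N, hN, hsupport⟩ := h.exists_support_in_cone (by positivity) hlinear
  exact ⟨N, {
    toIsRadialWave := h
    const_nonneg := hC
    const_mul_sq_le := hCε
    sign := fun t r ht hr => (hgrowth _ (abs_lt.1 (hsmall t r ht hr))).1
    pot_nonneg := fun t r ht hr => pot_nonneg (fun s hs => (hgrowth s hs).1)
      (hsmall t r ht hr)
    pot_le := fun t r ht hr => pot_le_mul_pow_four hC hcubic (hsmall t r ht hr)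
    abs_field_le := hsup
    mass_le := hmass
    radius_nonneg := hN
    support := hsupport }⟩

theorem spacetime_integrability_small_data_general (f : ℝ → ℝ) (hf : Continuous f)
    (C δ : ℝ) (hδ : 0 < δ)
    (hgrowth : ∀ s ∈ Set.Ioo (-δ) δ, 0 ≤ s * f s ∧ s * f s ≤ C * s ^ 4) :
    ∃ ε₀ : ℝ, 0 < ε₀ ∧
      ∀ (φ : ℝ → ℝ → ℝ) (ε : ℝ), ε ≤ ε₀ →
        IsRadialWave f φ →
        (∀ t r : ℝ, 0 ≤ t → 0 ≤ r → |φ t r| ≤ ε) →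
        (∀ t : ℝ, 0 ≤ t → ∫ r in Set.Ioi (0 : ℝ), reduced φ t r ^ 2 ≤ ε ^ 2) →
        IntegrableOn (fun t : ℝ => ∫ r in Set.Ioi (0 : ℝ), weightedDensity φ t r)
          (Set.Ioi (0 : ℝ)) := by
  have hC := nonneg_of_growth hδ hgrowth
  refine ⟨min (δ / 2) (1 / (17 * (C + 1))), by positivity, fun φ ε hε h hsup hmass => ?_⟩
  have hε0 : 0 ≤ ε := (abs_nonneg _).trans (hsup 0 0 le_rfl le_rfl)
  have hCε : C * ε ^ 2 ≤ 1 / 288 :=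
    calc C * ε ^ 2 ≤ C * (1 / (17 * (C + 1))) ^ 2 := by
          gcongr
          exact hε.trans (min_le_right _ _)
      _ = 1 / 289 * (C / (C + 1) ^ 2) := by
          rw [div_pow, mul_pow]
          field_simp
          norm_num
      _ ≤ 1 / 289 * 1 := by
          gcongr
          exact div_le_one_of_le₀ (by nlinarith) (by positivity)
      _ ≤ 1 / 288 := by norm_num
  have hεδ : ε < δ := (hε.trans (min_le_left _ _)).trans_lt (half_lt_self hδ)
  obtain ⟨N, hsmall⟩ := h.exists_isSmallRadialWave hf hδ hgrowth hεδ hCε hsup hmass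
  exact hsmall.integrableOn_integral_weightedDensity hf

end SmallData

section RadialFields

variable {g : ℝ → ℝ} {a b : ℝ}

lemma contDiff_comp_norm {E : Type*} [NormedAddCommGroup E] [InnerProductSpace ℝ E]
    {n : WithTop ℕ∞} (hg : ContDiff ℝ n g) (ha : 0 < a) (hzero : ∀ r < a, g r = 0) :
    ContDiff ℝ n fun x : E => g ‖x‖ := by
  refine contDiff_iff_contDiffAt.2 fun x => ?_
  rcases eq_or_ne x 0 with rfl | hx
  · refine (contDiffAt_const (c := (0 : ℝ))).congr_of_eventuallyEq ?_
    filter_upwards [Metric.ball_mem_nhds (0 : E) ha] with y hy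
    exact hzero _ (mem_ball_zero_iff.1 hy)
  · exact hg.contDiffAt.comp x (contDiffAt_norm ℝ hx)

lemma integrable_norm_gradient_sq {E : Type*} [NormedAddCommGroup E] [InnerProductSpace ℝ E]
    [CompleteSpace E] [MeasurableSpace E] [BorelSpace E] {μ : Measure E}
    [IsFiniteMeasureOnCompacts μ] {ψ : E → ℝ} (hψ : ContDiff ℝ 1 ψ) (hsupp : HasCompactSupport ψ) :
    Integrable (fun x => ‖gradient ψ x‖ ^ 2) μ := by
  have hgradient (x : E) : ‖gradient ψ x‖ = ‖fderiv ℝ ψ x‖ := LinearIsometryEquiv.norm_map _ _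
  simp only [hgradient]
  exact ((hψ.continuous_fderiv one_ne_zero).memLp_of_hasCompactSupport
    (hsupp.fderiv ℝ)).integrable_norm_pow two_ne_zero

lemma integral_fun_norm_E3 (g : ℝ → ℝ) :
    ∫ x : E3, g ‖x‖ = 4 * Real.pi * ∫ r in Set.Ioi (0 : ℝ), r ^ 2 * g r := by
  have hvolume : (volume : Measure E3).real (Metric.ball 0 1) = Real.pi * 4 / 3 := by
    rw [Measure.real, EuclideanSpace.volume_ball_fin_three, ENNReal.ofReal_one, one_pow, one_mul,
      ENNReal.toReal_ofReal (by positivity)]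
  rw [integral_fun_norm_addHaar volume g, hvolume, finrank_euclideanSpace_fin]
  simp only [nsmul_eq_mul, smul_eq_mul]
  push_cast
  ring

lemma integral_Ioi_mul_sq_le_integral_E3 (hg : ContDiff ℝ 1 g) (ha : 0 < a)
    (hzero : ∀ r, r < a ∨ b < r → g r = 0) :
    ∫ r in Set.Ioi (0 : ℝ), (r * g r) ^ 2 ≤
      ∫ x : E3, (g ‖x‖ ^ 2 + ‖gradient (fun y : E3 => g ‖y‖) x‖ ^ 2) := by
  have hψ : ContDiff ℝ 1 fun x : E3 => g ‖x‖ :=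
    contDiff_comp_norm hg ha fun r hr => hzero r (.inl hr)
  have hsupp : HasCompactSupport fun x : E3 => g ‖x‖ :=
    .of_support_subset_isCompact (isCompact_closedBall 0 b) fun x hx =>
      mem_closedBall_zero_iff.2 (le_of_not_gt fun hb => hx (hzero _ (.inr hb)))
  have hvalue : Integrable fun x : E3 => g ‖x‖ ^ 2 :=
    (hψ.continuous.memLp_of_hasCompactSupport hsupp).integrable_sq
  have hnonneg : 0 ≤ ∫ r in Set.Ioi (0 : ℝ), r ^ 2 * g r ^ 2 :=
    integral_nonneg fun r => by positivity
  calc ∫ r in Set.Ioi (0 : ℝ), (r * g r) ^ 2 = ∫ r in Set.Ioi (0 : ℝ), r ^ 2 * g r ^ 2 := by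
        simp only [mul_pow]
    _ ≤ 4 * Real.pi * ∫ r in Set.Ioi (0 : ℝ), r ^ 2 * g r ^ 2 :=
        le_mul_of_one_le_left hnonneg (by linarith [Real.pi_gt_three])
    _ = ∫ x : E3, g ‖x‖ ^ 2 := (integral_fun_norm_E3 fun r => g r ^ 2).symm
    _ ≤ _ := integral_mono hvalue (hvalue.add (integrable_norm_gradient_sq hψ hsupp)) fun x =>
        le_add_of_nonneg_right (sq_nonneg _)

end RadialFields

/-- Under the small-data flatness condition `0 ≤ s f(s) ≤ C s⁴` near the
origin, there is `ε₀ > 0` such that any radial solution whose associated field on `ℝ³` is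
uniformly `ε`-small (`ε ≤ ε₀`) in `H¹ ∩ L^∞` has finite weighted space-time norm. -/
theorem spacetime_integrability_small_data
    (f : ℝ → ℝ) (hf : ContDiff ℝ 1 f) (hf0 : f 0 = 0)
    (C δ : ℝ) (hC : 0 < C) (hδ : 0 < δ)
    (hgrowth : ∀ s ∈ Set.Ioo (-δ) δ, 0 ≤ s * f s ∧ s * f s ≤ C * s ^ 4) :
    ∃ ε₀ : ℝ, 0 < ε₀ ∧
      ∀ (φ : ℝ → ℝ → ℝ) (ε : ℝ), ε ≤ ε₀ →
        ContDiff ℝ (⊤ : ℕ∞) (Function.uncurry φ) →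
        SuppIn φ →
        (∀ t : ℝ, 0 ≤ t → ∀ r : ℝ, 0 < r →
          ptt φ t r = prr φ t r + (2 / r) * pr φ t r - f (φ t r)) →
        (∀ t : ℝ, 0 ≤ t → ∀ r : ℝ, 0 ≤ r →
          Real.sqrt (∫ x : E3,
              ((φ t ‖x‖) ^ 2 + ‖gradient (fun y : E3 => φ t ‖y‖) x‖ ^ 2))
            + |φ t r| ≤ ε) →
        IntegrableOn (fun t : ℝ => ∫ r in Set.Ioi (0:ℝ),
            (r ^ 2 / (1 + r) ^ 4) * ((φ t r) ^ 2 + (pr φ t r) ^ 2 + (pt φ t r) ^ 2))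
          (Set.Ioi (0:ℝ)) := by
  obtain ⟨ε₀, hε₀, hgeneral⟩ :=
    spacetime_integrability_small_data_general f hf.continuous C δ hδ hgrowth
  refine ⟨ε₀, hε₀, fun φ ε hε hφ hsupp hequation hsmall =>
    hgeneral φ ε hε ⟨hφ.of_le (by norm_cast), fun t _ => ?_, hequation⟩
      (fun t r ht hr => ?_) fun t ht => ?_⟩
  · obtain ⟨a, b, -, hzero⟩ := hsupp t
    exact ⟨b, fun r hr => hzero r (.inr hr)⟩
  · exact (le_add_of_nonneg_left (Real.sqrt_nonneg _)).trans (hsmall t ht r hr)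
  · obtain ⟨a, b, ha, hzero⟩ := hsupp t
    have hφt : ContDiff ℝ 1 (φ t) :=
      (hφ.of_le (by norm_cast)).comp (contDiff_prodMk_right t)
    exact (integral_Ioi_mul_sq_le_integral_E3 hφt ha hzero).trans (Real.sqrt_le_iff.1
      ((le_add_of_nonneg_right (abs_nonneg _)).trans (hsmall t ht 0 le_rfl))).2

end
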